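/- arXiv:2406.11488 — 2 statements merged into one kernel-verified Lean document; each statement's English description precedes it below -/
import Mathlib

section
/- For every deterministic one-way parity automaton A with n states there exists a reversible two-way parity automaton A′ with at most 4n² states recognizing the same language, i.e., an infinite word w ∈ A^ω is accepted by A′ if and only if it is accepted by A. -/
namespace Paper

/-! ## Two-way parity automata and transducers over infinite words.

An infinite word over an alphabet `A` is a function `ℕ → A`.
A configuration `⊢ u p v` with `w = u v` is encoded as a pair `(p, |u|) : Q × ℕ`.
The left end-marker `⊢` is encoded as `(none : Option A)`. -/

/-- A two-way automaton (without acceptance condition): states `Q` partitioned into forward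
states (`fwd`) and backward states, an initial forward state, and a transition relation `Δ`
over `Q × (A ∪ {⊢}) × Q` where transitions on the end-marker `⊢` (encoded `none`) go from
backward to forward states. -/
structure TwoWayAut (A : Type) where
  Q : Type
  finQ : Fintype Q
  fwd : Q → Prop
  init : Q
  init_fwd : fwd init
  Δ : Set (Q × Option A × Q)
  marker : ∀ p q, (p, (none : Option A), q) ∈ Δ → ¬ fwd p ∧ fwd q

attribute [instance] TwoWayAut.finQ

variable {A B : Type}

/-- `StepVia M w c t c'` : from configuration `c`, using transition `t`, the automaton `M`
reaches the successor configuration `c'` on input word `w`. -/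
def StepVia (M : TwoWayAut A) (w : ℕ → A) (c : M.Q × ℕ)
    (t : M.Q × Option A × M.Q) (c' : M.Q × ℕ) : Prop :=
  t ∈ M.Δ ∧ t.1 = c.1 ∧ t.2.2 = c'.1 ∧
    ((M.fwd c.1 ∧ t.2.1 = some (w c.2) ∧
        ((M.fwd c'.1 ∧ c'.2 = c.2 + 1) ∨ (¬ M.fwd c'.1 ∧ c'.2 = c.2))) ∨
     (¬ M.fwd c.1 ∧ 0 < c.2 ∧ t.2.1 = some (w (c.2 - 1)) ∧
        ((M.fwd c'.1 ∧ c'.2 = c.2) ∨ (¬ M.fwd c'.1 ∧ c'.2 = c.2 - 1))) ∨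
     (¬ M.fwd c.1 ∧ c.2 = 0 ∧ t.2.1 = none ∧ c'.2 = 0))

/-- The successor relation on configurations. -/
def Step (M : TwoWayAut A) (w : ℕ → A) (c c' : M.Q × ℕ) : Prop :=
  ∃ t, StepVia M w c t c'

/-- An infinite run of `M` on `w`, given by its configurations and the transitions taken. -/
def IsRun (M : TwoWayAut A) (w : ℕ → A) (cfg : ℕ → M.Q × ℕ)
    (tr : ℕ → M.Q × Option A × M.Q) : Prop :=
  cfg 0 = (M.init, 0) ∧ ∀ i, StepVia M w (cfg i) (tr i) (cfg (i + 1))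

/-- The run reads the whole word: the prefix lengths are unbounded. -/
def ReadsWhole (M : TwoWayAut A) (cfg : ℕ → M.Q × ℕ) : Prop :=
  ∀ n : ℕ, ∃ i, n ≤ (cfg i).2

/-- `t` occurs infinitely often in the sequence `tr`. -/
def InfOften {T : Type} (tr : ℕ → T) (t : T) : Prop :=
  ∀ n, ∃ i, n ≤ i ∧ tr i = t

def Deterministic (M : TwoWayAut A) : Prop :=
  ∀ p a q q', (p, a, q) ∈ M.Δ → (p, a, q') ∈ M.Δ → q = q'

def Codeterministic (M : TwoWayAut A) : Prop :=
  ∀ p p' a q, (p, a, q) ∈ M.Δ → (p', a, q) ∈ M.Δ → p = p'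

def Reversible (M : TwoWayAut A) : Prop :=
  Deterministic M ∧ Codeterministic M

def Oneway (M : TwoWayAut A) : Prop := ∀ q, M.fwd q

/-- A two-way parity automaton: a two-way automaton together with a finite family of
coloring functions (indexed by `CIdx`). -/
structure ParityAut (A : Type) extends TwoWayAut A where
  CIdx : Type
  finC : Fintype CIdx
  color : CIdx → (Q × Option A × Q) → ℕ

attribute [instance] ParityAut.finC

/-- The parity acceptance condition: for every coloring function, the minimal color of the
transitions taken infinitely often is even. -/
def ParityCond (M : ParityAut A) (tr : ℕ → M.Q × Option A × M.Q) : Prop :=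
  ∀ c : M.CIdx, Even (sInf {m : ℕ | ∃ t, InfOften tr t ∧ M.color c t = m})

/-- Acceptance of an infinite word by a two-way parity automaton. -/
def ParityAut.Accepts (M : ParityAut A) (w : ℕ → A) : Prop :=
  ∃ cfg tr, IsRun M.toTwoWayAut w cfg tr ∧ ReadsWhole M.toTwoWayAut cfg ∧ ParityCond M tr

/-- All colors of `M` (on its transitions) belong to `{0, …, ℓ-1}`. -/
def ColorsLt (M : ParityAut A) (ℓ : ℕ) : Prop :=
  ∀ (c : M.CIdx) t, t ∈ M.Δ → M.color c t < ℓ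

/-- `l` is a prefix of the infinite word `x`. -/
def IsPrefixOf {C : Type} (l : List C) (x : ℕ → C) : Prop :=
  ∀ (i : ℕ) (h : i < l.length), l.get ⟨i, h⟩ = x i

/-- Concatenation of the first `n` words of a sequence of finite words. -/
def prefixCat {C : Type} (f : ℕ → List C) : ℕ → List C
  | 0 => []
  | n + 1 => prefixCat f n ++ f n

/-- The concatenation of the sequence of finite words `f` is the infinite word `x`. -/
def FlattenTo {C : Type} (f : ℕ → List C) (x : ℕ → C) : Prop :=
  (∀ n, IsPrefixOf (prefixCat f n) x) ∧ ∀ m, ∃ n, m ≤ (prefixCat f n).length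

/-- A two-way parity transducer: a two-way parity automaton (whose underlying automaton is
required to be deterministic via hypotheses) together with an output function. -/
structure TwoWayTrans (A B : Type) extends ParityAut A where
  out : (Q × Option A × Q) → List B

/-- `T.Realizes w x` : the word `w` is accepted by (the deterministic transducer) `T`,
the produced output is infinite and equals `x`.  This is the graph of the partial function
`⟦T⟧ : A^ω ⇀ B^ω`. -/
def TwoWayTrans.Realizes (T : TwoWayTrans A B) (w : ℕ → A) (x : ℕ → B) : Prop :=
  ∃ cfg tr, IsRun T.toTwoWayAut w cfg tr ∧ ReadsWhole T.toTwoWayAut cfg ∧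
    ParityCond T.toParityAut tr ∧ FlattenTo (fun i => T.out (tr i)) x

/-- A two-way Büchi transducer: accepting transitions `acc` instead of coloring functions. -/
structure BuchiTrans (A B : Type) extends TwoWayAut A where
  acc : Set (Q × Option A × Q)
  out : (Q × Option A × Q) → List B

def BuchiTrans.Realizes (T : BuchiTrans A B) (w : ℕ → A) (x : ℕ → B) : Prop :=
  ∃ cfg tr, IsRun T.toTwoWayAut w cfg tr ∧ ReadsWhole T.toTwoWayAut cfg ∧
    (∀ n, ∃ i, n ≤ i ∧ tr i ∈ T.acc) ∧ FlattenTo (fun i => T.out (tr i)) x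

/-- A two-way transducer with no acceptance condition. -/
structure NoAccTrans (A B : Type) extends TwoWayAut A where
  out : (Q × Option A × Q) → List B

def NoAccTrans.Realizes (T : NoAccTrans A B) (w : ℕ → A) (x : ℕ → B) : Prop :=
  ∃ cfg tr, IsRun T.toTwoWayAut w cfg tr ∧ ReadsWhole T.toTwoWayAut cfg ∧
    FlattenTo (fun i => T.out (tr i)) x

/-! ## One-way parity automata, transducers, and copyless parity streaming string
transducers.  A one-way automaton has only forward states and never reads the end-marker,
so we use a simplified (equivalent) presentation. -/

structure OnewayAut (A : Type) where
  Q : Type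
  finQ : Fintype Q
  init : Q
  Δ : Set (Q × A × Q)
  CIdx : Type
  finC : Fintype CIdx
  color : CIdx → (Q × A × Q) → ℕ

attribute [instance] OnewayAut.finQ
attribute [instance] OnewayAut.finC

def OnewayDet (M : OnewayAut A) : Prop :=
  ∀ p a q q', (p, a, q) ∈ M.Δ → (p, a, q') ∈ M.Δ → q = q'

def OnewayRun (M : OnewayAut A) (w : ℕ → A) (s : ℕ → M.Q) : Prop :=
  s 0 = M.init ∧ ∀ i, (s i, w i, s (i + 1)) ∈ M.Δ

def OnewayParityCond (M : OnewayAut A) (tr : ℕ → M.Q × A × M.Q) : Prop :=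
  ∀ c : M.CIdx, Even (sInf {m : ℕ | ∃ t, InfOften tr t ∧ M.color c t = m})

def OnewayAut.Accepts (M : OnewayAut A) (w : ℕ → A) : Prop :=
  ∃ s, OnewayRun M w s ∧ OnewayParityCond M (fun i => (s i, w i, s (i + 1)))

def OnewayColorsLt (M : OnewayAut A) (ℓ : ℕ) : Prop :=
  ∀ (c : M.CIdx) t, t ∈ M.Δ → M.color c t < ℓ

/-- A one-way (deterministic) parity transducer. -/
structure OnewayTrans (A B : Type) extends OnewayAut A where
  out : (Q × A × Q) → List B

def OnewayTrans.Realizes (T : OnewayTrans A B) (w : ℕ → A) (x : ℕ → B) : Prop :=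
  ∃ s, OnewayRun T.toOnewayAut w s ∧
    OnewayParityCond T.toOnewayAut (fun i => (s i, w i, s (i + 1))) ∧
    FlattenTo (fun i => T.out (s i, w i, s (i + 1))) x

/-- Number of occurrences of `a` in the list `l` (classically). -/
noncomputable def occ {C : Type} (a : C) (l : List C) : ℕ :=
  l.countP fun x => @decide (x = a) (Classical.propDecidable _)

/-- A substitution `σ : R → (R ⊎ B)*` is copyless if every register occurs at most once in
the concatenation of all the `σ r'`. -/
def Copyless {R C : Type} [Fintype R] (σ : R → List (R ⊕ C)) : Prop :=
  ∀ r : R, (∑ r' : R, occ (Sum.inl r) (σ r')) ≤ 1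

/-- Applying an assignment `ν : R → B*` (extended to a morphism `(R ⊎ B)* → B*`). -/
def subApply {R C : Type} (ν : R → List C) : List (R ⊕ C) → List C
  | [] => []
  | Sum.inl r :: l => ν r ++ subApply ν l
  | Sum.inr b :: l => b :: subApply ν l

/-- A copyless parity streaming string transducer: a (deterministic) one-way parity
automaton with a finite set `R` of registers, a distinguished output register, and copyless
register updates, where the update of `outReg` always starts with `outReg`. -/
structure CPSST (A B : Type) extends OnewayAut A where
  R : Type
  finR : Fintype R
  outReg : R
  upd : (Q × A × Q) → R → List (R ⊕ B)
  copyless : ∀ t, @Copyless R B finR (upd t)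
  out_form : ∀ t, ∃ γ, upd t outReg = Sum.inl outReg :: γ

attribute [instance] CPSST.finR

/-- The register contents along a run: `ν_0 r = ε` and `ν_{i+1} = ν_i ∘ λ(t_i)`. -/
def regVal (T : CPSST A B) (w : ℕ → A) (s : ℕ → T.Q) : ℕ → T.R → List B
  | 0 => fun _ => []
  | i + 1 => fun r => subApply (regVal T w s i) (T.upd (s i, w i, s (i + 1)) r)

/-- `T.Realizes w x` : the (deterministic) CPSST `T` has an accepting run on `w` whose
output-register contents are unbounded with limit `x`. -/
def CPSST.Realizes (T : CPSST A B) (w : ℕ → A) (x : ℕ → B) : Prop :=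
  ∃ s, OnewayRun T.toOnewayAut w s ∧
    OnewayParityCond T.toOnewayAut (fun i => (s i, w i, s (i + 1))) ∧
    (∀ i, IsPrefixOf (regVal T w s i T.outReg) x) ∧
    (∀ m, ∃ i, m ≤ (regVal T w s i T.outReg).length)

/-- The one-way parity transducer with the same underlying automaton as the CPSST `T`,
which outputs on each transition the (copyless) substitution that `T` applies. -/
def enrich (T : CPSST A B) :
    OnewayTrans A {σ : T.R → List (T.R ⊕ B) // Copyless σ} where
  toOnewayAut := T.toOnewayAut
  out := fun t => [⟨T.upd t, T.copyless t⟩]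

/-! ## Merging forests -/

/-- A merging forest on `(Q⁺ ⊎ Q⁻, χ, ℓ)`: a finite rooted forest (given by a `parent` map
with no cycles) whose leaves (childless nodes) are injectively labeled in `Q⁻` and carry a
`χ`-tuple of integers `< ℓ`, whose roots are injectively labeled in `Q⁺`, and in which every
unary node (exactly one child) is a root. -/
structure MForest (Qp Qm χ : Type) (ℓ : ℕ) where
  V : Type
  finV : Fintype V
  parent : V → Option V
  acyc : ∀ v : V, ¬ Relation.TransGen (fun a b => parent a = some b) v v
  leafLab : V → Qm
  rootLab : V → Qp
  tup : V → χ → ℕ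
  tup_lt : ∀ v, (∀ u, parent u ≠ some v) → ∀ c, tup v c < ℓ
  leaf_inj : ∀ u v, (∀ u', parent u' ≠ some u) → (∀ v', parent v' ≠ some v) →
    leafLab u = leafLab v → u = v
  root_inj : ∀ u v, parent u = none → parent v = none → rootLab u = rootLab v → u = v
  unary_root : ∀ v : V, (∃! u, parent u = some v) → parent v = none

attribute [instance] MForest.finV

/-- Isomorphism of merging forests: a bijection of the nodes commuting with `parent` and
preserving the leaf labels, the leaf tuples and the root labels. -/
def MFIso {Qp Qm χ : Type} {ℓ : ℕ} (F G : MForest Qp Qm χ ℓ) : Prop :=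
  ∃ e : F.V ≃ G.V,
    (∀ v, G.parent (e v) = Option.map e (F.parent v)) ∧
    (∀ v, (∀ u, F.parent u ≠ some v) →
      F.leafLab v = G.leafLab (e v) ∧ ∀ c, F.tup v c = G.tup (e v) c) ∧
    (∀ v, F.parent v = none → F.rootLab v = G.rootLab (e v))

end Paper

namespace Paper

section OutlineConstruction

variable {A : Type}

theorem not_eq_of_ne {b c : Bool} (h : b ≠ c) : (!b) = c := by
  revert h; cases b <;> cases c <;> simp

theorem eq_not_of_ne {b c : Bool} (h : b ≠ c) : b = !c := by
  revert h; cases b <;> cases c <;> simp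

/-- Signed key of a state: the direction `b = true` is increasing rank. -/
noncomputable def okey (M : OnewayAut A) (b : Bool) (p : M.Q) : ℤ :=
  if b then ((Fintype.equivFin M.Q p : ℕ) : ℤ) else -((Fintype.equivFin M.Q p : ℕ) : ℤ)

theorem okey_inj (M : OnewayAut A) (b : Bool) (p q : M.Q) (h : okey M b p = okey M b q) :
    p = q := by
  apply (Fintype.equivFin M.Q).injective
  apply Fin.ext
  unfold okey at h
  cases b <;> simp at h <;> omega

theorem okey_not (M : OnewayAut A) (b : Bool) (p : M.Q) : okey M (!b) p = - okey M b p := by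
  unfold okey
  cases b <;> simp

/-- `p` moves to `p'` on `a` and is the extreme sibling in direction `b`. -/
def OUp (M : OnewayAut A) (p : M.Q) (b : Bool) (a : A) (p' : M.Q) : Prop :=
  (p, a, p') ∈ M.Δ ∧ ∀ r, (r, a, p') ∈ M.Δ → okey M b r ≤ okey M b p

/-- `p₁` is the next sibling of `p` in direction `b`. -/
def OSib (M : OnewayAut A) (p : M.Q) (b : Bool) (a : A) (p₁ : M.Q) : Prop :=
  ∃ p', (p, a, p') ∈ M.Δ ∧ (p₁, a, p') ∈ M.Δ ∧ okey M b p < okey M b p₁ ∧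
    ∀ r, (r, a, p') ∈ M.Δ → okey M b r ≤ okey M b p ∨ okey M b p₁ ≤ okey M b r

/-- `p` has no predecessor on `a`. -/
def OLeaf (M : OnewayAut A) (p : M.Q) (a : A) : Prop := ∀ r, (r, a, p) ∉ M.Δ

theorem OUp.left_unique {M : OnewayAut A} {p q r : M.Q} {b : Bool} {a : A}
    (h : OUp M p b a r) (h' : OUp M q b a r) : p = q :=
  okey_inj M b _ _ (le_antisymm (h'.2 _ h.1) (h.2 _ h'.1))

theorem OUp.right_unique {M : OnewayAut A} (hd : OnewayDet M) {p q r : M.Q} {b : Bool} {a : A}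
    (h : OUp M p b a q) (h' : OUp M p b a r) : q = r :=
  hd _ _ _ _ h.1 h'.1

theorem OSib.symm {M : OnewayAut A} {p q : M.Q} {b : Bool} {a : A}
    (h : OSib M p b a q) : OSib M q (!b) a p := by
  obtain ⟨p', h1, h2, h3, h4⟩ := h
  refine ⟨p', h2, h1, ?_, ?_⟩
  · rw [okey_not, okey_not]; omega
  · intro r hr
    rw [okey_not, okey_not, okey_not]
    have := h4 r hr
    omega

theorem OSib.right_unique {M : OnewayAut A} (hd : OnewayDet M) {p q r : M.Q} {b : Bool} {a : A}
    (h : OSib M p b a q) (h' : OSib M p b a r) : q = r := by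
  obtain ⟨p', h1, h2, h3, h4⟩ := h
  obtain ⟨p'', h1', h2', h3', h4'⟩ := h'
  obtain rfl := hd _ _ _ _ h1 h1'
  apply okey_inj M b
  have := h4 _ h2'
  have := h4' _ h2
  omega

theorem OSib.left_unique {M : OnewayAut A} (hd : OnewayDet M) {p q r : M.Q} {b : Bool} {a : A}
    (h : OSib M p b a r) (h' : OSib M q b a r) : p = q :=
  h.symm.right_unique hd h'.symm

theorem OUp.not_sib {M : OnewayAut A} (hd : OnewayDet M) {p q r : M.Q} {b : Bool} {a : A}
    (h : OUp M p b a q) (h' : OSib M p b a r) : False := by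
  obtain ⟨p', h1, h2, h3, h4⟩ := h'
  obtain rfl := hd _ _ _ _ h.1 h1
  have := h.2 _ h2
  omega

theorem up_or_sib (M : OnewayAut A) {p p' : M.Q} (b : Bool) {a : A}
    (h : (p, a, p') ∈ M.Δ) : (∃ r, OUp M p b a r) ∨ ∃ r, OSib M p b a r := by
  by_cases hne : {r | (r, a, p') ∈ M.Δ ∧ okey M b p < okey M b r}.Nonempty
  · right
    obtain ⟨r, hr, hmin⟩ := Set.exists_min_image _ (okey M b) (Set.toFinite _) hne
    refine ⟨r, p', h, hr.1, hr.2, fun r' hr' => ?_⟩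
    by_contra hc
    have := hmin r' ⟨hr', by omega⟩
    omega
  · left
    refine ⟨p', h, fun r hr => ?_⟩
    by_contra hc
    exact hne ⟨r, hr, by omega⟩

theorem leaf_or_up (M : OnewayAut A) (p : M.Q) (b : Bool) (a : A) :
    OLeaf M p a ∨ ∃ r, OUp M r b a p := by
  by_cases hne : {r | (r, a, p) ∈ M.Δ}.Nonempty
  · right
    obtain ⟨r, hr, hmax⟩ := Set.exists_max_image _ (okey M b) (Set.toFinite _) hne
    exact ⟨r, hr, hmax⟩
  · left
    intro r hr
    exact hne ⟨r, hr⟩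

/-- States of the outline automaton: two tokens, each with a side. -/
abbrev OState (M : OnewayAut A) : Type := (M.Q × Bool) × (M.Q × Bool)

/-- Transitions on a letter. -/
inductive OTr (M : OnewayAut A) (a : A) : OState M → OState M → Prop
  | f1 {p b q c p' q'} : b ≠ c → OUp M p b a p' → OUp M q c a q' →
      OTr M a ((p, b), (q, c)) ((p', b), (q', c))
  | f2 {p b q c p'} : b ≠ c → OSib M p b a p' →
      OTr M a ((p, b), (q, c)) ((p', !b), (q, c))
  | f3 {p b q c r q'} : b ≠ c → OUp M p b a r → OSib M q c a q' →
      OTr M a ((p, b), (q, c)) ((p, b), (q', !c))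
  | b1 {p b q p' q'} : OUp M p' b a p → OUp M q' b a q →
      OTr M a ((p, b), (q, b)) ((p', b), (q', b))
  | b2 {p b q} : OLeaf M p a →
      OTr M a ((p, b), (q, b)) ((p, !b), (q, b))
  | b3 {p b q r} : OUp M r b a p → OLeaf M q a →
      OTr M a ((p, b), (q, b)) ((p, b), (q, !b))

/-- Transitions on the end-marker. -/
inductive OMk (M : OnewayAut A) : OState M → OState M → Prop
  | m1 {p b q} : p ≠ M.init → OMk M ((p, b), (q, b)) ((p, !b), (q, b))
  | m2 {b q} : q ≠ M.init → OMk M ((M.init, b), (q, b)) ((M.init, b), (q, !b))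

/-- Transitions on a letter or the end-marker. -/
def ORel (M : OnewayAut A) : Option A → OState M → OState M → Prop
  | none => OMk M
  | some a => OTr M a

theorem ORel.det {M : OnewayAut A} (hd : OnewayDet M) (a : Option A) (x y y' : OState M)
    (h : ORel M a x y) (h' : ORel M a x y') : y = y' := by
  cases a with
  | none =>
    cases h <;> cases h' <;> first | rfl | contradiction
  | some a =>
    cases h with
    | f1 hbc h1 h2 =>
      cases h' with
      | f1 _ h3 h4 => rw [h1.right_unique hd h3, h2.right_unique hd h4]
      | f2 _ h3 => exact (h1.not_sib hd h3).elim
      | f3 _ h3 h4 => exact (h2.not_sib hd h4).elim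
      | b1 | b2 | b3 => exact (hbc rfl).elim
    | f2 hbc h1 =>
      cases h' with
      | f1 _ h3 h4 => exact (h3.not_sib hd h1).elim
      | f2 _ h3 => rw [h1.right_unique hd h3]
      | f3 _ h3 h4 => exact (h3.not_sib hd h1).elim
      | b1 | b2 | b3 => exact (hbc rfl).elim
    | f3 hbc h1 h2 =>
      cases h' with
      | f1 _ h3 h4 => exact (h4.not_sib hd h2).elim
      | f2 _ h3 => exact (h1.not_sib hd h3).elim
      | f3 _ h3 h4 => rw [h2.right_unique hd h4]
      | b1 | b2 | b3 => exact (hbc rfl).elim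
    | b1 h1 h2 =>
      cases h' with
      | f1 hbc | f2 hbc | f3 hbc => exact (hbc rfl).elim
      | b1 h3 h4 => rw [h1.left_unique h3, h2.left_unique h4]
      | b2 h3 => exact (h3 _ h1.1).elim
      | b3 h3 h4 => exact (h4 _ h2.1).elim
    | b2 h1 =>
      cases h' with
      | f1 hbc | f2 hbc | f3 hbc => exact (hbc rfl).elim
      | b1 h3 h4 => exact (h1 _ h3.1).elim
      | b2 h3 => rfl
      | b3 h3 h4 => exact (h1 _ h3.1).elim
    | b3 h1 h2 =>
      cases h' with
      | f1 hbc | f2 hbc | f3 hbc => exact (hbc rfl).elim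
      | b1 h3 h4 => exact (h2 _ h4.1).elim
      | b2 h3 => exact (h3 _ h1.1).elim
      | b3 h3 h4 => rfl

/-- Inverse description of the letter transitions by the target state. -/
theorem OTr.inv {M : OnewayAut A} {a : A} {x : OState M} {p q : M.Q} {b c : Bool}
    (h : OTr M a x ((p, b), (q, c))) :
    (b ≠ c ∧ ∃ p' q', OUp M p' b a p ∧ OUp M q' c a q ∧ x = ((p', b), (q', c))) ∨
    (b = c ∧ ∃ p', OSib M p b a p' ∧ x = ((p', !b), (q, c))) ∨
    (b = c ∧ ∃ r q', OUp M p b a r ∧ OSib M q c a q' ∧ x = ((p, b), (q', !c))) ∨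
    (b = c ∧ ∃ p' q', OUp M p b a p' ∧ OUp M q c a q' ∧ x = ((p', b), (q', c))) ∨
    (b ≠ c ∧ OLeaf M p a ∧ x = ((p, !b), (q, c))) ∨
    (b ≠ c ∧ (∃ r, OUp M r b a p) ∧ OLeaf M q a ∧ x = ((p, b), (q, !c))) := by
  cases h with
  | f1 hbc h1 h2 => exact Or.inl ⟨hbc, _, _, h1, h2, rfl⟩
  | f2 hbc h1 =>
    refine Or.inr (Or.inl ⟨?_, _, h1.symm, ?_⟩)
    · exact not_eq_of_ne hbc
    · simp
  | f3 hbc h1 h2 =>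
    refine Or.inr (Or.inr (Or.inl ⟨?_, _, _, h1, h2.symm, ?_⟩))
    · exact eq_not_of_ne hbc
    · simp
  | b1 h1 h2 => exact Or.inr (Or.inr (Or.inr (Or.inl ⟨rfl, _, _, h1, h2, rfl⟩)))
  | b2 h1 =>
    refine Or.inr (Or.inr (Or.inr (Or.inr (Or.inl ⟨?_, h1, ?_⟩))))
    · simp
    · simp
  | b3 h1 h2 =>
    refine Or.inr (Or.inr (Or.inr (Or.inr (Or.inr ⟨?_, ⟨_, h1⟩, h2, ?_⟩))))
    · simp
    · simp

theorem ORel.codet {M : OnewayAut A} (hd : OnewayDet M) (a : Option A) (x x' y : OState M)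
    (h : ORel M a x y) (h' : ORel M a x' y) : x = x' := by
  cases a with
  | none =>
    obtain ⟨⟨p, b⟩, ⟨q, c⟩⟩ := y
    have key : ∀ z, OMk M z ((p, b), (q, c)) →
        b ≠ c ∧ ((p ≠ M.init ∧ z = ((p, !b), (q, c))) ∨ (p = M.init ∧ z = ((p, b), (q, !c)))) := by
      intro z hz
      cases hz with
      | m1 hne => exact ⟨by simp, Or.inl ⟨hne, by simp⟩⟩
      | m2 hne => exact ⟨by simp, Or.inr ⟨rfl, by simp⟩⟩
    have h1 := key _ h
    have h2 := key _ h'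
    grind
  | some a =>
    obtain ⟨⟨p, b⟩, ⟨q, c⟩⟩ := y
    rcases OTr.inv h with ⟨hb, p1, q1, h1, h2, rfl⟩ | ⟨hb, p1, h1, rfl⟩ |
      ⟨hb, r1, q1, h1, h2, rfl⟩ | ⟨hb, p1, q1, h1, h2, rfl⟩ | ⟨hb, h1, rfl⟩ |
      ⟨hb, ⟨r1, h1⟩, h2, rfl⟩ <;>
    rcases OTr.inv h' with ⟨hb', p2, q2, h3, h4, rfl⟩ | ⟨hb', p2, h3, rfl⟩ |
      ⟨hb', r2, q2, h3, h4, rfl⟩ | ⟨hb', p2, q2, h3, h4, rfl⟩ | ⟨hb', h3, rfl⟩ |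
      ⟨hb', ⟨r2, h3⟩, h4, rfl⟩ <;>
    first
    | rfl
    | exact (hb hb').elim
    | exact (hb' hb).elim
    | exact (h3.not_sib hd h1).elim
    | exact (h1.not_sib hd h3).elim
    | exact (h2.not_sib hd h4).elim
    | exact (h4.not_sib hd h2).elim
    | exact (h1 _ h3.1).elim
    | exact (h3 _ h1.1).elim
    | exact (h2 _ h4.1).elim
    | exact (h4 _ h2.1).elim
    | rw [h1.left_unique h3, h2.left_unique h4]
    | rw [h1.right_unique hd h3, h2.right_unique hd h4]
    | rw [h1.right_unique hd h3]
    | rw [h2.right_unique hd h4]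

/-- An upper bound on all colors of the coloring function `c`. -/
noncomputable def obound [Fintype A] (M : OnewayAut A) (c : M.CIdx) : ℕ :=
  (Finset.univ : Finset (M.Q × A × M.Q)).sup (M.color c)

open Classical in
/-- The coloring of the outline automaton. -/
noncomputable def ocolor [Fintype A] (M : OnewayAut A) (c : M.CIdx)
    (t : OState M × Option A × OState M) : ℕ :=
  if h : ∃ u : M.Q × A × M.Q, u ∈ M.Δ ∧ t.1 = ((u.1, false), (u.1, true)) ∧ t.2.1 = some u.2.1
  then M.color c h.choose else obound M c

/-- The outline automaton. -/
noncomputable def outline [Fintype A] (M : OnewayAut A) : ParityAut A where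
  Q := OState M
  finQ := inferInstance
  fwd := fun x => x.1.2 ≠ x.2.2
  init := ((M.init, false), (M.init, true))
  init_fwd := by simp
  Δ := {t | ORel M t.2.1 t.1 t.2.2}
  marker := by
    intro p q h
    change OMk M p q at h
    cases h <;> simp
  CIdx := M.CIdx
  finC := M.finC
  color := ocolor M

theorem ocolor_eq [Fintype A] {M : OnewayAut A} (hd : OnewayDet M) (c : M.CIdx)
    (t : OState M × Option A × OState M) (u : M.Q × A × M.Q) (hu : u ∈ M.Δ)
    (h1 : t.1 = ((u.1, false), (u.1, true))) (h2 : t.2.1 = some u.2.1) :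
    ocolor M c t = M.color c u := by
  have h : ∃ u : M.Q × A × M.Q, u ∈ M.Δ ∧ t.1 = ((u.1, false), (u.1, true)) ∧
    t.2.1 = some u.2.1 := ⟨u, hu, h1, h2⟩
  have hs := h.choose_spec
  unfold ocolor
  rw [dif_pos h]
  congr 1
  generalize h.choose = v at hs
  obtain ⟨hv, h3, h4⟩ := hs
  obtain ⟨p, a, q⟩ := u
  obtain ⟨p', a', q'⟩ := v
  rw [h1] at h3
  rw [h2] at h4
  simp at h3 h4
  subst h3 h4
  rw [hd _ _ _ _ hu hv]

theorem ocolor_cases [Fintype A] (M : OnewayAut A) (c : M.CIdx)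
    (t : OState M × Option A × OState M) :
    ocolor M c t = obound M c ∨ ∃ u : M.Q × A × M.Q, u ∈ M.Δ ∧
      t.1 = ((u.1, false), (u.1, true)) ∧ t.2.1 = some u.2.1 := by
  by_cases h : ∃ u : M.Q × A × M.Q, u ∈ M.Δ ∧ t.1 = ((u.1, false), (u.1, true)) ∧
    t.2.1 = some u.2.1
  · exact Or.inr h
  · left
    unfold ocolor
    rw [dif_neg h]

theorem outline_reversible [Fintype A] {M : OnewayAut A} (hd : OnewayDet M) :
    Reversible (outline M).toTwoWayAut :=
  ⟨fun p a q q' h h' => ORel.det hd a p q q' h h',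
   fun p p' a q h h' => ORel.codet hd a p p' q h h'⟩

theorem step_inj {M : TwoWayAut A} (hc : Codeterministic M) {w : ℕ → A}
    {c₁ c₂ c : M.Q × ℕ} {t₁ t₂ : M.Q × Option A × M.Q}
    (h₁ : StepVia M w c₁ t₁ c) (h₂ : StepVia M w c₂ t₂ c) : c₁ = c₂ := by
  obtain ⟨x, i⟩ := c₁
  obtain ⟨y, j⟩ := c₂
  obtain ⟨z, k⟩ := c
  obtain ⟨x', a, z'⟩ := t₁
  obtain ⟨y', b, z''⟩ := t₂
  obtain ⟨m1, e1, e2, h1⟩ := h₁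
  obtain ⟨m2, e3, e4, h2⟩ := h₂
  dsimp only at *
  subst e1 e2 e3 e4
  have hmk := M.marker
  have hab : a = b := by
    grind
  subst hab
  obtain rfl := hc _ _ _ _ m1 m2
  have : i = j := by grind
  rw [this]

theorem run_inj [Fintype A] {M : OnewayAut A} (hd : OnewayDet M) {w : ℕ → A}
    {cfg : ℕ → (outline M).Q × ℕ} {tr : ℕ → (outline M).Q × Option A × (outline M).Q}
    (hr : IsRun (outline M).toTwoWayAut w cfg tr) : Function.Injective cfg := by
  have hno : ∀ k, cfg (k + 1) ≠ cfg 0 := by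
    intro k hk
    have h := hr.2 k
    rw [hk, hr.1] at h
    obtain ⟨h1, h2, h3, h4⟩ := h
    have hz : (tr k).2.1 = none := by
      rcases h4 with ⟨_, _, h5⟩ | ⟨_, h6, _, h5⟩ | ⟨_, _, h5, _⟩
      · rcases h5 with ⟨_, h5⟩ | ⟨h5, _⟩
        · simp at h5
        · exact (h5 (outline M).init_fwd).elim
      · rcases h5 with ⟨_, h5⟩ | ⟨h5, _⟩
        · dsimp only at h5; omega
        · exact (h5 (outline M).init_fwd).elim
      · exact h5
    change ORel M (tr k).2.1 (tr k).1 (tr k).2.2 at h1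
    rw [hz, h3] at h1
    change OMk M _ ((M.init, false), (M.init, true)) at h1
    generalize (tr k).1 = z at h1
    generalize hy : (((M.init, false), (M.init, true)) : OState M) = y at h1
    cases h1 with
    | m1 h => simp at hy; exact h hy.1.1.symm
    | m2 h => simp at hy; exact h hy.2.1.symm
  have key : ∀ i j, cfg i = cfg (i + (j + 1)) → False := by
    intro i
    induction i with
    | zero =>
      intro j h
      rw [Nat.zero_add] at h
      exact hno j h.symm
    | succ i ih =>
      intro j h
      apply ih j
      have h1 := hr.2 i
      have h2 := hr.2 (i + (j + 1))
      rw [show i + 1 + (j + 1) = i + (j + 1) + 1 by omega] at h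
      rw [← h] at h2
      exact step_inj (outline_reversible hd).2 h1 h2
  intro i j h
  rcases lt_trichotomy i j with hij | hij | hij
  · obtain ⟨d, rfl⟩ := Nat.exists_eq_add_of_lt hij
    exact (key i d h).elim
  · exact hij
  · obtain ⟨d, rfl⟩ := Nat.exists_eq_add_of_lt hij
    exact (key j d h.symm).elim

/-- Positions tend to infinity along an infinite run. -/
theorem run_tendsto [Fintype A] {M : OnewayAut A} (hd : OnewayDet M) {w : ℕ → A}
    {cfg : ℕ → (outline M).Q × ℕ} {tr : ℕ → (outline M).Q × Option A × (outline M).Q}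
    (hr : IsRun (outline M).toTwoWayAut w cfg tr) (n : ℕ) :
    ∃ K, ∀ k, K ≤ k → n ≤ (cfg k).2 := by
  have hfin : {k | (cfg k).2 < n}.Finite := by
    have h1 : (Set.univ ×ˢ Set.Iio n : Set ((outline M).Q × ℕ)).Finite :=
      Set.finite_univ.prod (Set.finite_Iio n)
    refine (h1.preimage (run_inj hd hr).injOn).subset ?_
    intro k hk
    exact ⟨trivial, hk⟩
  obtain ⟨K, hK⟩ := hfin.bddAbove
  refine ⟨K + 1, fun k hk => ?_⟩
  by_contra hc
  have := hK (show k ∈ {k | (cfg k).2 < n} from not_le.mp hc)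
  omega

/-- Closure conditions on a token predicate at level `i`. -/
structure TokClosed (M : OnewayAut A) (w : ℕ → A) (P : ℕ → M.Q → Bool → Prop) (i : ℕ) : Prop where
  up : ∀ p b p', P i p b → OUp M p b (w i) p' → P (i + 1) p' b
  sib : ∀ p b p', P i p b → OSib M p b (w i) p' → P i p' (!b)
  down : ∀ p b p' j, i = j + 1 → P i p b → OUp M p' b (w j) p → P j p' b
  leaf : ∀ p b j, i = j + 1 → P i p b → OLeaf M p (w j) → P i p (!b)
  mark : ∀ p b, i = 0 → P i p b → p ≠ M.init → P i p (!b)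

/-- Description of the steps of the outline automaton. -/
theorem outline_step_cases [Fintype A] {M : OnewayAut A} {w : ℕ → A} {x y : OState M} {i j : ℕ}
    {t : (outline M).Q × Option A × (outline M).Q}
    (h : StepVia (outline M).toTwoWayAut w (x, i) t (y, j)) :
    (x.1.2 ≠ x.2.2 ∧ t = (x, some (w i), y) ∧ OTr M (w i) x y ∧
      ((y.1.2 ≠ y.2.2 ∧ j = i + 1) ∨ (y.1.2 = y.2.2 ∧ j = i))) ∨
    (x.1.2 = x.2.2 ∧ ∃ i', i = i' + 1 ∧ OTr M (w i') x y ∧ t = (x, some (w i'), y) ∧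
      ((y.1.2 ≠ y.2.2 ∧ j = i) ∨ (y.1.2 = y.2.2 ∧ j = i'))) ∨
    (x.1.2 = x.2.2 ∧ i = 0 ∧ OMk M x y ∧ t = (x, none, y) ∧ j = 0) := by
  obtain ⟨x', a, y'⟩ := t
  obtain ⟨h1, h2, h3, h4⟩ := h
  dsimp only at h2 h3 h4
  subst h2 h3
  change ORel M a x' y' at h1
  have hf : ∀ z : OState M, (outline M).fwd z ↔ z.1.2 ≠ z.2.2 := fun z => Iff.rfl
  rcases h4 with ⟨h5, rfl, h6⟩ | ⟨h5, h0, rfl, h6⟩ | ⟨h5, h0, rfl, h6⟩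
  · left
    refine ⟨h5, rfl, h1, ?_⟩
    rcases h6 with h6 | h6
    · exact Or.inl h6
    · exact Or.inr ⟨not_not.mp h6.1, h6.2⟩
  · right; left
    refine ⟨not_not.mp h5, i - 1, by omega, h1, rfl, ?_⟩
    rcases h6 with h6 | h6
    · exact Or.inl h6
    · exact Or.inr ⟨not_not.mp h6.1, h6.2⟩
  · right; right
    exact ⟨not_not.mp h5, h0, h1, rfl, h6⟩

theorem tok_preserved [Fintype A] {M : OnewayAut A} {w : ℕ → A} {x y : OState M} {i j : ℕ}
    {t : (outline M).Q × Option A × (outline M).Q}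
    (h : StepVia (outline M).toTwoWayAut w (x, i) t (y, j))
    {P R : ℕ → M.Q → Bool → Prop} (hP : TokClosed M w P i) (hR : TokClosed M w R i)
    (h1 : P i x.1.1 x.1.2) (h2 : R i x.2.1 x.2.2) :
    P j y.1.1 y.1.2 ∧ R j y.2.1 y.2.2 := by
  rcases outline_step_cases h with ⟨hx, -, ht, hy⟩ | ⟨hx, i', rfl, ht, -, hy⟩ | ⟨hx, rfl, ht, -, rfl⟩
  · cases ht with
    | f1 hbc u1 u2 =>
      have : j = i + 1 := by grind
      subst this
      exact ⟨hP.up _ _ _ h1 u1, hR.up _ _ _ h2 u2⟩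
    | f2 hbc u1 =>
      have hb := not_eq_of_ne hbc
      have : j = i := by grind
      subst this
      exact ⟨hP.sib _ _ _ h1 u1, h2⟩
    | f3 hbc u1 u2 =>
      have hb := eq_not_of_ne hbc
      have : j = i := by grind
      subst this
      exact ⟨h1, hR.sib _ _ _ h2 u2⟩
    | b1 | b2 | b3 => exact (hx rfl).elim
  · cases ht with
    | f1 hbc | f2 hbc | f3 hbc => exact (hbc hx).elim
    | b1 u1 u2 =>
      have : j = i' := by grind
      subst this
      exact ⟨hP.down _ _ _ _ rfl h1 u1, hR.down _ _ _ _ rfl h2 u2⟩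
    | b2 u1 =>
      have : j = i' + 1 := by grind
      subst this
      exact ⟨hP.leaf _ _ _ rfl h1 u1, h2⟩
    | b3 u1 u2 =>
      have : j = i' + 1 := by grind
      subst this
      exact ⟨h1, hR.leaf _ _ _ rfl h2 u2⟩
  · cases ht with
    | m1 hp => exact ⟨hP.mark _ _ rfl h1 hp, h2⟩
    | m2 hq => exact ⟨h1, hR.mark _ _ rfl h2 hq⟩

/-- `(p, i)` leads to `(q, n)` along the word `w`. -/
inductive Dsc (M : OnewayAut A) (w : ℕ → A) (n : ℕ) (q : M.Q) : ℕ → M.Q → Prop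
  | refl : Dsc M w n q n q
  | step {i p p'} : (p, w i, p') ∈ M.Δ → Dsc M w n q (i + 1) p' → Dsc M w n q i p

theorem Dsc.le {M : OnewayAut A} {w : ℕ → A} {n i : ℕ} {q p : M.Q} (h : Dsc M w n q i p) :
    i ≤ n := by
  induction h with
  | refl => exact le_rfl
  | step _ _ ih => omega

theorem Dsc.eq {M : OnewayAut A} {w : ℕ → A} {n : ℕ} {q p : M.Q} (h : Dsc M w n q n p) :
    p = q := by
  cases h with
  | refl => rfl
  | step _ h => have := h.le; omega

theorem Dsc.next {M : OnewayAut A} (hd : OnewayDet M) {w : ℕ → A} {n i : ℕ} {q p p' : M.Q}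
    (h : Dsc M w n q i p) (hi : i < n ∨ ∀ r, (q, w n, r) ∉ M.Δ) (he : (p, w i, p') ∈ M.Δ) :
    Dsc M w n q (i + 1) p' := by
  cases h with
  | refl =>
    rcases hi with hi | hi
    · omega
    · exact (hi _ he).elim
  | step h1 h2 => rwa [hd _ _ _ _ he h1]

theorem Dsc.snoc {M : OnewayAut A} {w : ℕ → A} {n i : ℕ} {q p r : M.Q}
    (h : Dsc M w n q i p) (he : (q, w n, r) ∈ M.Δ) : Dsc M w (n + 1) r i p := by
  induction h with
  | refl => exact Dsc.step he Dsc.refl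
  | step h1 _ ih => exact Dsc.step h1 ih

theorem Dsc.closed {M : OnewayAut A} (hd : OnewayDet M) {w : ℕ → A} {n i : ℕ} {q : M.Q}
    (hi : i < n ∨ ∀ r, (q, w n, r) ∉ M.Δ) :
    TokClosed M w (fun i p _ => Dsc M w n q i p) i where
  up := fun p b p' h hu => h.next hd hi hu.1
  sib := fun p b p' h ⟨r, h1, h2, _⟩ => Dsc.step h2 (h.next hd hi h1)
  down := by
    rintro p b p' j rfl h hu
    exact Dsc.step hu.1 h
  leaf := fun _ _ _ _ h _ => h
  mark := fun _ _ _ h _ => h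

/-- A run of the outline automaton reading the whole word yields a run of `M`. -/
theorem outline_to_run [Fintype A] {M : OnewayAut A} (hd : OnewayDet M) {w : ℕ → A}
    {cfg : ℕ → (outline M).Q × ℕ} {tr : ℕ → (outline M).Q × Option A × (outline M).Q}
    (hr : IsRun (outline M).toTwoWayAut w cfg tr) (hw : ReadsWhole (outline M).toTwoWayAut cfg) :
    ∃ s, OnewayRun M w s := by
  have hnext : ∀ n q, Dsc M w n q 0 M.init → ∃ r, (q, w n, r) ∈ M.Δ := by
    intro n q hq
    by_contra hc
    push Not at hc
    have hinv : ∀ k, Dsc M w n q (cfg k).2 (cfg k).1.1.1 ∧ Dsc M w n q (cfg k).2 (cfg k).1.2.1 := by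
      intro k
      induction k with
      | zero => rw [hr.1]; exact ⟨hq, hq⟩
      | succ k ih =>
        exact tok_preserved (hr.2 k) (Dsc.closed hd (Or.inr hc)) (Dsc.closed hd (Or.inr hc))
          ih.1 ih.2
    obtain ⟨k, hk⟩ := hw (n + 1)
    have := (hinv k).1.le
    omega
  have hex : ∀ n, ∃ q, Dsc M w n q 0 M.init := by
    intro n
    induction n with
    | zero => exact ⟨_, Dsc.refl⟩
    | succ n ih =>
      obtain ⟨q, hq⟩ := ih
      obtain ⟨r, hr⟩ := hnext n q hq
      exact ⟨r, hq.snoc hr⟩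
  choose f hf using hnext
  let S : ∀ n, {q // Dsc M w n q 0 M.init} := fun n =>
    Nat.rec ⟨M.init, Dsc.refl⟩ (fun n x => ⟨f n x.1 x.2, x.2.snoc (hf n x.1 x.2)⟩) n
  exact ⟨fun n => (S n).1, rfl, fun n => hf n (S n).1 (S n).2⟩

/-- `(p, i)` merges with the run `s` from the side `σ`. -/
inductive Off (M : OnewayAut A) (w : ℕ → A) (s : ℕ → M.Q) (σ : Bool) : ℕ → M.Q → Prop
  | base {i p} : (p, w i, s (i + 1)) ∈ M.Δ → okey M σ (s i) < okey M σ p → Off M w s σ i p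
  | step {i p p'} : (p, w i, p') ∈ M.Δ → Off M w s σ (i + 1) p' → Off M w s σ i p

theorem Off.ne {M : OnewayAut A} (hd : OnewayDet M) {w : ℕ → A} {s : ℕ → M.Q}
    (hs : OnewayRun M w s) {σ : Bool} {i : ℕ} {p : M.Q} (h : Off M w s σ i p) : p ≠ s i := by
  induction h with
  | base h1 h2 => rintro rfl; exact lt_irrefl _ h2
  | step h1 _ ih =>
    rintro rfl
    exact ih (hd _ _ _ _ h1 (hs.2 _))

theorem Off.disjoint {M : OnewayAut A} (hd : OnewayDet M) {w : ℕ → A} {s : ℕ → M.Q}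
    (hs : OnewayRun M w s) {i : ℕ} {p : M.Q} (h : Off M w s false i p)
    (h' : Off M w s true i p) : False := by
  induction h with
  | base h1 h2 =>
    cases h' with
    | base h3 h4 =>
      have := okey_not M true
      simp at this
      rw [this, this] at h2
      omega
    | step h3 h4 => exact h4.ne hd hs (hd _ _ _ _ h3 h1)
  | step h1 h2 ih =>
    cases h' with
    | base h3 h4 => exact h2.ne hd hs (hd _ _ _ _ h1 h3)
    | step h3 h4 =>
      rw [hd _ _ _ _ h3 h1] at h4
      exact ih h4

/-- The token `(p, b)` at level `i` lies on the outline of `s` of side `σ`. -/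
def OIn (M : OnewayAut A) (w : ℕ → A) (s : ℕ → M.Q) (σ : Bool) (i : ℕ) (p : M.Q) (b : Bool) :
    Prop :=
  Off M w s σ i p ∨ (p = s i ∧ b = σ)

theorem OIn.meet {M : OnewayAut A} (hd : OnewayDet M) {w : ℕ → A} {s : ℕ → M.Q}
    (hs : OnewayRun M w s) {i : ℕ} {p : M.Q} {b c : Bool} (h : OIn M w s false i p b)
    (h' : OIn M w s true i p c) : p = s i ∧ b = false ∧ c = true := by
  rcases h with h | ⟨rfl, rfl⟩
  · rcases h' with h' | ⟨rfl, rfl⟩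
    · exact (h.disjoint hd hs h').elim
    · exact (h.ne hd hs rfl).elim
  · rcases h' with h' | ⟨_, rfl⟩
    · exact (h'.ne hd hs rfl).elim
    · exact ⟨rfl, rfl, rfl⟩

theorem OIn.succ {M : OnewayAut A} {w : ℕ → A} {s : ℕ → M.Q}
    (hs : OnewayRun M w s) {σ : Bool} {i : ℕ} {p : M.Q} {b : Bool} (h : OIn M w s σ i p b) :
    ∃ r, (p, w i, r) ∈ M.Δ := by
  rcases h with h | ⟨rfl, rfl⟩
  · cases h with
    | base h _ => exact ⟨_, h⟩
    | step h _ => exact ⟨_, h⟩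
  · exact ⟨_, hs.2 i⟩

theorem Bool.eq_or_eq_not' (b σ : Bool) : b = σ ∨ b = !σ := by
  cases b <;> cases σ <;> simp

theorem OIn.closed {M : OnewayAut A} (hd : OnewayDet M) {w : ℕ → A} {s : ℕ → M.Q}
    (hs : OnewayRun M w s) (σ : Bool) (i : ℕ) : TokClosed M w (OIn M w s σ) i where
  up := by
    rintro p b p' (h | ⟨rfl, rfl⟩) hu
    · cases h with
      | base h1 h2 =>
        obtain rfl := hd _ _ _ _ hu.1 h1
        right
        refine ⟨rfl, ?_⟩
        rcases Bool.eq_or_eq_not' b σ with h | rfl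
        · exact h
        · have := hu.2 _ (hs.2 i)
          rw [okey_not, okey_not] at this
          omega
      | step h1 h2 =>
        obtain rfl := hd _ _ _ _ hu.1 h1
        exact Or.inl h2
    · right
      exact ⟨hd _ _ _ _ hu.1 (hs.2 i), rfl⟩
  sib := by
    rintro p b p' (h | ⟨rfl, rfl⟩) ⟨r, h3, h4, h5, h6⟩
    · cases h with
      | base h1 h2 =>
        obtain rfl := hd _ _ _ _ h3 h1
        rcases Bool.eq_or_eq_not' b σ with rfl | rfl
        · left
          exact Off.base h4 (by omega)
        · have := h6 _ (hs.2 i)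
          rw [okey_not] at this h5
          simp only [okey_not] at this h5
          by_cases he : p' = s i
          · right
            exact ⟨he, by simp⟩
          · left
            refine Off.base h4 ?_
            have hne : okey M σ p' ≠ okey M σ (s i) := fun h => he (okey_inj _ _ _ _ h)
            omega
      | step h1 h2 =>
        obtain rfl := hd _ _ _ _ h3 h1
        exact Or.inl (Off.step h4 h2)
    · left
      obtain rfl := hd _ _ _ _ h3 (hs.2 i)
      exact Off.base h4 h5
  down := by
    rintro p b p' j rfl (h | ⟨rfl, rfl⟩) hu
    · exact Or.inl (Off.step hu.1 h)
    · by_cases he : p' = s j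
      · exact Or.inr ⟨he, rfl⟩
      · left
        refine Off.base hu.1 ?_
        have h1 := hu.2 _ (hs.2 j)
        have hne : okey M b p' ≠ okey M b (s j) := fun h => he (okey_inj _ _ _ _ h)
        omega
  leaf := by
    rintro p b j rfl (h | ⟨rfl, rfl⟩) hl
    · exact Or.inl h
    · exact (hl _ (hs.2 j)).elim
  mark := by
    rintro p b rfl (h | ⟨rfl, rfl⟩) hl
    · exact Or.inl h
    · exact (hl hs.1).elim

/-- Both tokens lie on their outlines. -/
def OInv (M : OnewayAut A) (w : ℕ → A) (s : ℕ → M.Q) (c : OState M × ℕ) : Prop :=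
  OIn M w s false c.2 c.1.1.1 c.1.1.2 ∧ OIn M w s true c.2 c.1.2.1 c.1.2.2

theorem OInv.init {M : OnewayAut A} {w : ℕ → A} {s : ℕ → M.Q} (hs : OnewayRun M w s) :
    OInv M w s (((M.init, false), (M.init, true)), 0) :=
  ⟨Or.inr ⟨hs.1.symm, rfl⟩, Or.inr ⟨hs.1.symm, rfl⟩⟩

theorem OInv.step [Fintype A] {M : OnewayAut A} (hd : OnewayDet M) {w : ℕ → A} {s : ℕ → M.Q}
    (hs : OnewayRun M w s) {c c' : OState M × ℕ} {t : OState M × Option A × OState M}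
    (h : OInv M w s c) (ht : StepVia (outline M).toTwoWayAut w c t c') : OInv M w s c' :=
  tok_preserved ht (OIn.closed hd hs _ _) (OIn.closed hd hs _ _) h.1 h.2

theorem OInv.exists_step [Fintype A] {M : OnewayAut A} (hd : OnewayDet M) {w : ℕ → A}
    {s : ℕ → M.Q} (hs : OnewayRun M w s) (c : OState M × ℕ) (h : OInv M w s c) :
    ∃ (t : OState M × Option A × OState M) (c' : OState M × ℕ),
      StepVia (outline M).toTwoWayAut w c t c' := by
  obtain ⟨⟨⟨p, b⟩, ⟨q, c⟩⟩, i⟩ := c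
  obtain ⟨h1, h2⟩ := h
  dsimp only at h1 h2
  have hf : ∀ z : OState M, (outline M).fwd z ↔ z.1.2 ≠ z.2.2 := fun z => Iff.rfl
  by_cases hbc : b = c
  · subst hbc
    rcases Nat.eq_zero_or_pos i with rfl | hi
    · have mk : ∀ y : OState M, OMk M ((p, b), (q, b)) y →
          ∃ (t : OState M × Option A × OState M) (c' : OState M × ℕ),
            StepVia (outline M).toTwoWayAut w (((p, b), (q, b)), 0) t c' := by
        intro y hy
        refine ⟨(((p, b), (q, b)), none, y), (y, 0), hy, rfl, rfl, ?_⟩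
        right; right
        exact ⟨by simp [hf], rfl, rfl, rfl⟩
      by_cases hp : p = M.init
      · by_cases hq : q = M.init
        · subst hp
          subst hq
          have := OIn.meet hd hs h1 h2
          grind
        · subst hp
          exact mk _ (OMk.m2 hq)
      · exact mk _ (OMk.m1 hp)
    · have mk : ∀ y : OState M, OTr M (w (i - 1)) ((p, b), (q, b)) y →
          ∃ (t : OState M × Option A × OState M) (c' : OState M × ℕ),
            StepVia (outline M).toTwoWayAut w (((p, b), (q, b)), i) t c' := by
        intro y hy
        by_cases hy' : y.1.2 = y.2.2
        · refine ⟨(((p, b), (q, b)), some (w (i - 1)), y), (y, i - 1), hy, rfl, rfl, ?_⟩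
          right; left
          exact ⟨by simp [hf], hi, rfl, Or.inr ⟨by simp [hf, hy'], rfl⟩⟩
        · refine ⟨(((p, b), (q, b)), some (w (i - 1)), y), (y, i), hy, rfl, rfl, ?_⟩
          right; left
          exact ⟨by simp [hf], hi, rfl, Or.inl ⟨hy', rfl⟩⟩
      rcases leaf_or_up M p b (w (i - 1)) with hl | ⟨r, hr⟩
      · exact mk _ (OTr.b2 hl)
      · rcases leaf_or_up M q b (w (i - 1)) with hl' | ⟨r', hr'⟩
        · exact mk _ (OTr.b3 hr hl')
        · exact mk _ (OTr.b1 hr hr')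
  · have mk : ∀ y : OState M, OTr M (w i) ((p, b), (q, c)) y →
        ∃ (t : OState M × Option A × OState M) (c' : OState M × ℕ),
          StepVia (outline M).toTwoWayAut w (((p, b), (q, c)), i) t c' := by
      intro y hy
      by_cases hy' : y.1.2 = y.2.2
      · refine ⟨(((p, b), (q, c)), some (w i), y), (y, i), hy, rfl, rfl, ?_⟩
        left
        exact ⟨hbc, rfl, Or.inr ⟨by simp [hf, hy'], rfl⟩⟩
      · refine ⟨(((p, b), (q, c)), some (w i), y), (y, i + 1), hy, rfl, rfl, ?_⟩
        left
        exact ⟨hbc, rfl, Or.inl ⟨hy', rfl⟩⟩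
    obtain ⟨p', hp'⟩ := h1.succ hs
    obtain ⟨q', hq'⟩ := h2.succ hs
    rcases up_or_sib M b hp' with ⟨r, hr⟩ | ⟨r, hr⟩
    · rcases up_or_sib M c hq' with ⟨r', hr'⟩ | ⟨r', hr'⟩
      · exact mk _ (OTr.f1 hbc hr hr')
      · exact mk _ (OTr.f3 hbc hr hr')
    · exact mk _ (OTr.f2 hbc hr)

theorem run_to_outline [Fintype A] {M : OnewayAut A} (hd : OnewayDet M) {w : ℕ → A}
    {s : ℕ → M.Q} (hs : OnewayRun M w s) :
    ∃ cfg tr, IsRun (outline M).toTwoWayAut w cfg tr ∧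
      ReadsWhole (outline M).toTwoWayAut cfg := by
  choose ft fc hfc using OInv.exists_step (w := w) (s := s) hd hs
  let S : ℕ → {c : OState M × ℕ // OInv M w s c} := fun n =>
    Nat.rec ⟨(((M.init, false), (M.init, true)), 0), OInv.init hs⟩
      (fun _ x => ⟨fc x.1 x.2, x.2.step hd hs (hfc x.1 x.2)⟩) n
  have hr : IsRun (outline M).toTwoWayAut w (fun n => (S n).1)
      (fun n => ft (S n).1 (S n).2) := ⟨rfl, fun n => hfc (S n).1 (S n).2⟩
  refine ⟨_, _, hr, fun n => ?_⟩
  obtain ⟨K, hK⟩ := run_tendsto hd hr n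
  exact ⟨K, hK K le_rfl⟩

/-- Every configuration of the main run is visited by the outline automaton. -/
theorem visits_main [Fintype A] {M : OnewayAut A} (hd : OnewayDet M) {w : ℕ → A}
    {s : ℕ → M.Q} (hs : OnewayRun M w s)
    {cfg : ℕ → (outline M).Q × ℕ} {tr : ℕ → (outline M).Q × Option A × (outline M).Q}
    (hr : IsRun (outline M).toTwoWayAut w cfg tr) (hinv : ∀ k, OInv M w s (cfg k)) (n : ℕ) :
    ∃ k, cfg k = (((s n, false), (s n, true)), n) := by
  have hd0 : Dsc M w n (s n) 0 M.init := by
    rw [← hs.1]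
    clear hinv
    induction n with
    | zero => exact Dsc.refl
    | succ n ih => exact ih.snoc (hs.2 n)
  have hJ : ∀ k, (∀ k', k' < k → (cfg k').2 < n) →
      Dsc M w n (s n) (cfg k).2 (cfg k).1.1.1 ∧ Dsc M w n (s n) (cfg k).2 (cfg k).1.2.1 := by
    intro k
    induction k with
    | zero => intro _; rw [hr.1]; exact ⟨hd0, hd0⟩
    | succ k ih =>
      intro hk
      have ih' := ih (fun k' h => hk k' (by omega))
      have hlt := hk k (by omega)
      exact tok_preserved (hr.2 k) (Dsc.closed hd (Or.inl hlt)) (Dsc.closed hd (Or.inl hlt))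
        ih'.1 ih'.2
  have hex : ∃ k, n ≤ (cfg k).2 := by
    obtain ⟨K, hK⟩ := run_tendsto hd hr n
    exact ⟨K, hK K le_rfl⟩
  classical
  have hk := Nat.find_spec hex
  have hmin : ∀ k', k' < Nat.find hex → (cfg k').2 < n := fun k' h => not_le.mp (Nat.find_min hex h)
  refine ⟨Nat.find hex, ?_⟩
  generalize Nat.find hex = k at hk hmin
  obtain ⟨j1, j2⟩ := hJ k hmin
  have hi := hinv k
  generalize hc : cfg k = c at *
  obtain ⟨⟨⟨p, b⟩, ⟨q, c⟩⟩, i⟩ := c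
  dsimp only at hk j1 j2
  have : i = n := le_antisymm j1.le hk
  subst this
  obtain rfl := j1.eq
  obtain rfl := j2.eq
  obtain ⟨-, rfl, rfl⟩ := OIn.meet hd hs hi.1 hi.2
  rfl

theorem pos_le_time [Fintype A] {M : OnewayAut A} {w : ℕ → A}
    {cfg : ℕ → (outline M).Q × ℕ} {tr : ℕ → (outline M).Q × Option A × (outline M).Q}
    (hr : IsRun (outline M).toTwoWayAut w cfg tr) (k : ℕ) : (cfg k).2 ≤ k := by
  induction k with
  | zero => rw [hr.1]
  | succ k ih =>
    obtain ⟨-, -, -, h⟩ := hr.2 k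
    rcases h with ⟨_, _, h | h⟩ | ⟨_, _, _, h | h⟩ | ⟨_, _, _, h⟩ <;> omega

theorem parity_iff [Fintype A] {M : OnewayAut A} (hd : OnewayDet M) {w : ℕ → A}
    {s : ℕ → M.Q} (hs : OnewayRun M w s)
    {cfg : ℕ → (outline M).Q × ℕ} {tr : ℕ → (outline M).Q × Option A × (outline M).Q}
    (hr : IsRun (outline M).toTwoWayAut w cfg tr) :
    ParityCond (outline M) tr ↔ OnewayParityCond M (fun i => (s i, w i, s (i + 1))) := by
  have hinv : ∀ k, OInv M w s (cfg k) := by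
    intro k
    induction k with
    | zero => rw [hr.1]; exact OInv.init hs
    | succ k ih => exact ih.step hd hs (hr.2 k)
  have hmain := visits_main hd hs hr hinv
  have key : ∀ c : M.CIdx,
      sInf {m : ℕ | ∃ t, InfOften tr t ∧ (outline M).color c t = m} =
      sInf {m : ℕ | ∃ t, InfOften (fun i => (s i, w i, s (i + 1))) t ∧ M.color c t = m} := by
    intro c
    set S' := {m : ℕ | ∃ t, InfOften tr t ∧ (outline M).color c t = m} with hS'
    set S := {m : ℕ | ∃ t, InfOften (fun i => (s i, w i, s (i + 1))) t ∧ M.color c t = m} with hS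
    have hne : S.Nonempty := by
      obtain ⟨t, ht⟩ := Finite.exists_infinite_fiber (fun i : ℕ => (s i, w i, s (i + 1)))
      refine ⟨M.color c t, t, fun n => ?_, rfl⟩
      have hinf : ((fun i : ℕ => (s i, w i, s (i + 1))) ⁻¹' {t}).Infinite :=
        Set.infinite_coe_iff.mp ht
      obtain ⟨i, hi, hni⟩ := hinf.exists_gt n
      exact ⟨i, hni.le, hi⟩
    have hbound : ∀ m ∈ S, m ≤ obound M c := by
      rintro m ⟨t, -, rfl⟩
      exact Finset.le_sup (f := M.color c) (Finset.mem_univ t)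
    have hsub : S ⊆ S' := by
      rintro m ⟨u, hu, rfl⟩
      have hvis : ∀ i, (s i, w i, s (i + 1)) = u → ∃ k, i ≤ k ∧
          (tr k).1 = ((u.1, false), (u.1, true)) ∧ (tr k).2.1 = some u.2.1 ∧ tr k ∈ (outline M).Δ := by
        rintro i rfl
        obtain ⟨k, hk⟩ := hmain i
        refine ⟨k, ?_, ?_⟩
        · have := pos_le_time hr k
          rw [hk] at this
          exact this
        · obtain ⟨h1, h2, h3, h4⟩ := hr.2 k
          rw [hk] at h2 h4
          refine ⟨h2, ?_, h1⟩
          rcases h4 with ⟨_, h5, _⟩ | ⟨h5, _⟩ | ⟨h5, _⟩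
          · exact h5
          · exact (h5 (by change false ≠ true; simp)).elim
          · exact (h5 (by change false ≠ true; simp)).elim
      obtain ⟨i0, -, hi0⟩ := hu 0
      have huΔ : u ∈ M.Δ := by rw [← hi0]; exact hs.2 i0
      obtain ⟨k0, -, h1, h2, h3⟩ := hvis i0 hi0
      refine ⟨tr k0, fun n => ?_, ocolor_eq hd c (tr k0) u huΔ h1 h2⟩
      obtain ⟨i, hni, hi⟩ := hu n
      obtain ⟨k, hik, h4, h5, h6⟩ := hvis i hi
      refine ⟨k, by omega, ?_⟩
      change ORel M (tr k).2.1 (tr k).1 (tr k).2.2 at h6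
      change ORel M (tr k0).2.1 (tr k0).1 (tr k0).2.2 at h3
      rw [h4, h5] at h6
      rw [h1, h2] at h3
      have h7 := ORel.det hd _ _ _ _ h6 h3
      exact Prod.ext (h4.trans h1.symm) (Prod.ext (h5.trans h2.symm) h7)
    have hsub' : ∀ m ∈ S', m ∈ S ∨ m = obound M c := by
      rintro m ⟨t, ht, rfl⟩
      rcases ocolor_cases M c t with h | ⟨u, hu, h1, h2⟩
      · exact Or.inr h
      · left
        refine ⟨u, fun n => ?_, (ocolor_eq hd c t u hu h1 h2).symm⟩
        obtain ⟨K, hK⟩ := run_tendsto hd hr n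
        obtain ⟨k, hk, hkt⟩ := ht K
        refine ⟨(cfg k).2, hK k hk, ?_⟩
        obtain ⟨-, h4, -, h6⟩ := hr.2 k
        have hi := hinv k
        rw [hkt, h1] at h4
        rw [hkt, h2] at h6
        generalize cfg k = cc at *
        obtain ⟨x, i⟩ := cc
        dsimp only at h4 h6
        subst h4
        obtain ⟨h7, -, -⟩ := OIn.meet hd hs hi.1 hi.2
        dsimp only at h7
        have h8 : u.2.1 = w i := by
          rcases h6 with ⟨_, h5, _⟩ | ⟨h5, _⟩ | ⟨h5, _⟩
          · exact Option.some.inj h5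
          · exact (h5 (by change false ≠ true; simp)).elim
          · exact (h5 (by change false ≠ true; simp)).elim
        obtain ⟨p, a, q⟩ := u
        dsimp only at h7 h8 ⊢
        subst h7 h8
        rw [hd _ _ _ _ hu (hs.2 i)]
    have hm := Nat.sInf_mem hne
    apply le_antisymm
    · exact Nat.sInf_le (hsub hm)
    · have hm' := Nat.sInf_mem (hne.mono hsub)
      rcases hsub' _ hm' with h | h
      · exact Nat.sInf_le h
      · rw [h]
        exact hbound _ hm
  constructor
  · intro h c
    have := h c
    rw [key c] at this
    exact this
  · intro h c
    have := h c
    rw [← key c] at this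
    exact this

end OutlineConstruction

end Paper

namespace Paper

/-- Every deterministic one-way parity automaton `M` with `n` states is
equivalent (same accepted language of infinite words) to a reversible two-way parity
automaton `M'` with at most `4n²` states. -/
theorem odba_to_rba (A : Type) [Fintype A] (M : OnewayAut A) (n : ℕ)
    (hdet : OnewayDet M) (hn : Fintype.card M.Q = n) :
    ∃ M' : ParityAut A,
      Reversible M'.toTwoWayAut ∧
      Fintype.card M'.Q ≤ 4 * n ^ 2 ∧
      (∀ w : ℕ → A, M'.Accepts w ↔ M.Accepts w) := by
  refine ⟨outline M, outline_reversible hdet, ?_, fun w => ⟨?_, ?_⟩⟩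
  · have : Fintype.card (outline M).Q = Fintype.card (OState M) := rfl
    rw [this]
    simp only [Fintype.card_prod, Fintype.card_bool, hn]
    apply le_of_eq
    ring
  · rintro ⟨cfg, tr, hr, hw, hp⟩
    obtain ⟨s, hs⟩ := outline_to_run hdet hr hw
    exact ⟨s, hs, (parity_iff hdet hs hr).mp hp⟩
  · rintro ⟨s, hs, hp⟩
    obtain ⟨cfg, tr, hr, hw⟩ := run_to_outline hdet hs
    exact ⟨cfg, tr, hr, hw, (parity_iff hdet hs hr).mpr hp⟩

end Paper
end

section
/- Let T be a copyless parity streaming string transducer with n states and m registers. Then there exists a reversible two-way parity transducer S with at most C·n²·m states (for some absolute constant C) such that ⟦S⟧ = ⟦T⟧ as partial functions from A^ω to B^ω. -/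
namespace Paper
/-! ## Part 1: generic reversible box machines -/

section Generic

/-- position of the port on side `d` of the `k`-th letter (`true` is the left side). -/
def gpos (k : ℕ) (d : Bool) : ℕ := if d then k else k + 1

/-- One step of a box machine: enter a letter on a port, leave it on the matched port. -/
inductive GStep {A P O : Type} (box : A → Bool × P → Bool × P → O → Prop) (mk : P → P → Prop)
    (o0 : O) (w : ℕ → A) : P × Bool × ℕ → P × Bool × ℕ → O → Prop
  | letter (k : ℕ) (d : Bool) (p : P) (d' : Bool) (p' : P) (o : O) :
      box (w k) (d, p) (d', p') o → GStep box mk o0 w (p, d, gpos k d) (p', !d', gpos k d') o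
  | mark (p p' : P) : mk p p' → GStep box mk o0 w (p, false, 0) (p', true, 0) o0

/-- Time reversal of configurations. -/
def grev {P : Type} (c : P × Bool × ℕ) : P × Bool × ℕ := (c.1, !c.2.1, c.2.2)

theorem grev_grev {P : Type} (c : P × Bool × ℕ) : grev (grev c) = c := by
  simp [grev]

theorem grev_ne {P : Type} (c : P × Bool × ℕ) : grev c ≠ c := by
  intro h
  have := congrArg (fun c => c.2.1) h
  simp [grev] at this

variable {A P O : Type} {box : A → Bool × P → Bool × P → O → Prop} {mk : P → P → Prop}
    {o0 : O} {w : ℕ → A}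

theorem gstep_symm (hb : ∀ a z z' o, box a z z' o → box a z' z o)
    (hm : ∀ p p', mk p p' → mk p' p) {c c' : P × Bool × ℕ} {o : O}
    (h : GStep box mk o0 w c c' o) : GStep box mk o0 w (grev c') (grev c) o := by
  cases h with
  | letter k d p d' p' o h =>
    have := GStep.letter (box := box) (mk := mk) (o0 := o0) (w := w) k d' p' d p o (hb _ _ _ _ h)
    simpa [grev] using this
  | mark p p' h =>
    exact GStep.mark (box := box) (mk := mk) (o0 := o0) (w := w) p' p (hm _ _ h)

theorem gpos_inj {k k' : ℕ} {d : Bool} (h : gpos k d = gpos k' d) : k = k' := by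
  unfold gpos at h; split at h <;> omega

theorem gstep_fun (hb : ∀ a z z' z'' o o', box a z z' o → box a z z'' o' → z' = z'' ∧ o = o')
    (hm : ∀ p p' p'', mk p p' → mk p p'' → p' = p'') {c c' c'' : P × Bool × ℕ} {o o' : O}
    (h : GStep box mk o0 w c c' o) (h' : GStep box mk o0 w c c'' o') : c' = c'' ∧ o = o' := by
  generalize hc : c = c1 at h'
  cases h with
  | letter k d p d' p' o h =>
    cases h' with
    | letter k1 d1 p1 d1' p1' o1 h1 =>
      simp only [Prod.mk.injEq] at hc
      obtain ⟨rfl, rfl, hk⟩ := hc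
      obtain rfl := gpos_inj hk
      obtain ⟨h2, h3⟩ := hb _ _ _ _ _ _ h h1
      simp only [Prod.mk.injEq] at h2
      obtain ⟨rfl, rfl⟩ := h2
      exact ⟨rfl, h3⟩
    | mark p p' h =>
      simp only [Prod.mk.injEq] at hc
      obtain ⟨rfl, rfl, hk⟩ := hc
      simp [gpos] at hk
  | mark p p' h =>
    cases h' with
    | letter k1 d1 p1 d1' p1' o1 h1 =>
      simp only [Prod.mk.injEq] at hc
      obtain ⟨rfl, rfl, hk⟩ := hc
      simp [gpos] at hk
    | mark p1 p1' h1 =>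
      simp only [Prod.mk.injEq] at hc
      obtain ⟨rfl, _⟩ := hc
      rw [hm _ _ _ h h1]; exact ⟨rfl, rfl⟩

end Generic

section Orbit

/-- `It f c0 n c`: `c` is reached from `c0` in exactly `n` steps. -/
inductive It {C : Type} (f : C → C → Prop) (c0 : C) : ℕ → C → Prop
  | zero : It f c0 0 c0
  | succ (n : ℕ) (c c' : C) : It f c0 n c → f c c' → It f c0 (n + 1) c'

variable {C : Type} {f : C → C → Prop} {c0 : C} {rev : C → C}

theorem It.pred {n : ℕ} {c : C} (h : It f c0 (n + 1) c) : ∃ d, It f c0 n d ∧ f d c := by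
  cases h with
  | succ n d c h1 h2 => exact ⟨d, h1, h2⟩

theorem It.uniq (hf : ∀ c c' c'', f c c' → f c c'' → c' = c'') {n : ℕ} {c c' : C}
    (h : It f c0 n c) (h' : It f c0 n c') : c = c' := by
  induction n generalizing c c' with
  | zero => cases h; cases h'; rfl
  | succ n ih =>
    obtain ⟨d, h1, h2⟩ := h.pred
    obtain ⟨d', h1', h2'⟩ := h'.pred
    obtain rfl := ih h1 h1'
    exact hf _ _ _ h2 h2'

theorem It.time_aux (hf : ∀ c c' c'', f c c' → f c c'' → c' = c'')
    (hrr : ∀ c, rev (rev c) = c)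
    (hs : ∀ c c', f c c' → f (rev c') (rev c)) (h0 : ∀ c, ¬ f (rev c0) c) (n k : ℕ) (c : C)
    (h : It f c0 n c) (h' : It f c0 (n + k + 1) c) : False := by
  induction n generalizing c with
  | zero =>
    cases h
    obtain ⟨d, h1, h2⟩ := h'.pred
    exact h0 _ (hs _ _ h2)
  | succ n ih =>
    obtain ⟨d, h1, h2⟩ := h.pred
    obtain ⟨d', h1', h2'⟩ := h'.pred
    have : rev d = rev d' := hf _ _ _ (hs _ _ h2) (hs _ _ h2')
    have : d = d' := by rw [← hrr d, this, hrr]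
    subst this
    exact ih d h1 (by rwa [show n + k + 1 = n + 1 + k by omega])

theorem It.time (hf : ∀ c c' c'', f c c' → f c c'' → c' = c'')
    (hrr : ∀ c, rev (rev c) = c)
    (hs : ∀ c c', f c c' → f (rev c') (rev c)) (h0 : ∀ c, ¬ f (rev c0) c) {n m : ℕ} {c : C}
    (h : It f c0 n c) (h' : It f c0 m c) : n = m := by
  rcases lt_trichotomy n m with hl | hl | hl
  · exfalso
    obtain ⟨k, rfl⟩ := Nat.exists_eq_add_of_lt hl
    exact It.time_aux hf hrr hs h0 n k c h h'
  · exact hl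
  · exfalso
    obtain ⟨k, rfl⟩ := Nat.exists_eq_add_of_lt hl
    exact It.time_aux hf hrr hs h0 m k c h' h

theorem It.norev_aux (hf : ∀ c c' c'', f c c' → f c c'' → c' = c'')
    (hrr : ∀ c, rev (rev c) = c)
    (hs : ∀ c c', f c c' → f (rev c') (rev c)) (hn : ∀ c, rev c ≠ c)
    (hne : ∀ c, ¬ f c (rev c)) (k : ℕ) : ∀ (n : ℕ) (c : C),
    It f c0 n c → It f c0 (n + k) (rev c) → False := by
  induction k using Nat.strong_induction_on with
  | _ k ih =>
    intro n c h h'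
    match k, ih, h' with
    | 0, _, h' => exact hn _ (It.uniq hf h' h)
    | 1, _, h' =>
      obtain ⟨d, h1, h2⟩ := It.pred h'
      obtain rfl := It.uniq hf h h1
      exact hne _ h2
    | k + 2, ih, h' =>
      obtain ⟨d, h1, h2⟩ := It.pred (n := n + k + 1) h'
      have h3 := hs _ _ h2
      rw [hrr] at h3
      refine ih k (by omega) (n + 1) (rev d) (It.succ _ _ _ h h3) ?_
      rw [hrr]
      rwa [show n + 1 + k = n + k + 1 by omega]

theorem It.norev (hf : ∀ c c' c'', f c c' → f c c'' → c' = c'')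
    (hrr : ∀ c, rev (rev c) = c)
    (hs : ∀ c c', f c c' → f (rev c') (rev c)) (hn : ∀ c, rev c ≠ c)
    (hne : ∀ c, ¬ f c (rev c)) {n m : ℕ} {c : C}
    (h : It f c0 n c) (h' : It f c0 m (rev c)) : False := by
  rcases le_total n m with hl | hl
  · obtain ⟨k, rfl⟩ := Nat.exists_eq_add_of_le hl
    exact It.norev_aux hf hrr hs hn hne k n c h h'
  · obtain ⟨k, rfl⟩ := Nat.exists_eq_add_of_le hl
    exact It.norev_aux hf hrr hs hn hne k m (rev c) h' (by rwa [hrr])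

theorem It.hits (hf : ∀ c c' c'', f c c' → f c c'' → c' = c'')
    (hrr : ∀ c, rev (rev c) = c)
    (hs : ∀ c c', f c c' → f (rev c') (rev c)) (hn : ∀ c, rev c ≠ c)
    (hne : ∀ c, ¬ f c (rev c)) (h0 : ∀ c, ¬ f (rev c0) c)
    (V : Set C) (hV : V.Finite) (e : C) (hc0 : c0 ∈ V)
    (hcl : ∀ c ∈ V, c ≠ e → c ≠ rev c0 → ∃ c' ∈ V, f c c') :
    ∃ n, It f c0 n e ∧ ∀ k < n, ∃ c ∈ V, It f c0 k c := by
  classical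
  have key : ∀ n, (∀ k < n, ¬ It f c0 k e) → ∃ c ∈ V, It f c0 n c := by
    intro n
    induction n with
    | zero => intro _; exact ⟨c0, hc0, It.zero⟩
    | succ n ih =>
      intro hk
      obtain ⟨c, hc, hi⟩ := ih (fun k hk' => hk k (by omega))
      have h1 : c ≠ e := by rintro rfl; exact hk n (by omega) hi
      have h2 : c ≠ rev c0 := by
        rintro rfl
        exact It.norev hf hrr hs hn hne It.zero hi
      obtain ⟨c', hc', hs'⟩ := hcl c hc h1 h2
      exact ⟨c', hc', It.succ _ _ _ hi hs'⟩
  by_cases hex : ∃ n, It f c0 n e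
  · refine ⟨Nat.find hex, Nat.find_spec hex, fun k hk => key k fun l hl => ?_⟩
    exact Nat.find_min hex (by omega)
  · exfalso
    push Not at hex
    choose g hg hi using fun n => key n fun k _ => hex k
    have hinj : Function.Injective g := by
      intro a b hab
      have h1 := hi a
      rw [hab] at h1
      exact It.time hf hrr hs h0 h1 (hi b)
    exact Set.infinite_of_injective_forall_mem hinj hg hV

end Orbit
/-! ## Part 2: contour climbers -/

section Climb

variable {A Q : Type} (E : A → Q → Q → Prop) (rk : Q → ℕ)

/-- the order of siblings, oriented by `ε`. -/
def rel (ε : Bool) (q q' : Q) : Prop := if ε then rk q < rk q' else rk q' < rk q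

/-- The contour matching of ports around a letter. -/
inductive Cl (a : A) : Bool × Q × Bool → Bool × Q × Bool → Prop
  | pass1 (q q' : Q) (ε : Bool) : E a q q' → (∀ q2, E a q2 q' → ¬ rel rk ε q q2) →
      Cl a (true, q, ε) (false, q', ε)
  | pass2 (q q' : Q) (ε : Bool) : E a q q' → (∀ q2, E a q2 q' → ¬ rel rk ε q q2) →
      Cl a (false, q', ε) (true, q, ε)
  | bnc (q q2 q' : Q) (ε : Bool) : E a q q' → E a q2 q' → rel rk ε q q2 →
      (∀ q3, E a q3 q' → rel rk ε q q3 → rel rk ε q3 q2 → False) →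
      Cl a (true, q, ε) (true, q2, !ε)
  | leaf (q' : Q) (ε : Bool) : (∀ q, ¬ E a q q') → Cl a (false, q', ε) (false, q', !ε)

variable {E rk}

theorem rel_not {ε : Bool} {q q' : Q} : rel rk (!ε) q q' ↔ rel rk ε q' q := by
  cases ε <;> simp [rel]

theorem rel_tri (hrk : Function.Injective rk) (ε : Bool) (q q' : Q) :
    rel rk ε q q' ∨ q = q' ∨ rel rk ε q' q := by
  rcases lt_trichotomy (rk q) (rk q') with h | h | h
  · cases ε <;> simp [rel, h]
  · exact Or.inr (Or.inl (hrk h))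
  · cases ε <;> simp [rel, h]

theorem rel_irr {ε : Bool} {q : Q} : ¬ rel rk ε q q := by
  cases ε <;> simp [rel]

theorem rel_trans {ε : Bool} {q q' q'' : Q} (h : rel rk ε q q') (h' : rel rk ε q' q'') :
    rel rk ε q q'' := by
  cases ε <;> simp only [rel, if_true, Bool.false_eq_true, if_false] at * <;> omega

theorem Cl.symm {a : A} {x y : Bool × Q × Bool} (h : Cl E rk a x y) : Cl E rk a y x := by
  cases h with
  | pass1 q q' ε h1 h2 => exact Cl.pass2 _ _ _ h1 h2
  | pass2 q q' ε h1 h2 => exact Cl.pass1 _ _ _ h1 h2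
  | bnc q q2 q' ε h1 h2 h3 h4 =>
    have := Cl.bnc (E := E) (rk := rk) (a := a) q2 q q' (!ε) h2 h1 (rel_not.2 h3)
      (fun q3 h5 h6 h7 => h4 q3 h5 (rel_not.1 h7) (rel_not.1 h6))
    simpa using this
  | leaf q' ε h =>
    have := Cl.leaf (E := E) (rk := rk) (a := a) q' (!ε) h
    simpa using this

theorem Cl.fn (hE : ∀ a q q1 q2, E a q q1 → E a q q2 → q1 = q2) (hrk : Function.Injective rk)
    {a : A} {x y z : Bool × Q × Bool} (h : Cl E rk a x y) (h' : Cl E rk a x z) : y = z := by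
  generalize hx : x = x1 at h'
  cases h with
  | pass1 q q' ε h1 h2 =>
    cases h' with
    | pass1 p p' ε' g1 g2 =>
      simp only [Prod.mk.injEq, true_and] at hx
      obtain ⟨rfl, rfl⟩ := hx
      rw [hE _ _ _ _ h1 g1]
    | pass2 p p' ε' g1 g2 => simp at hx
    | bnc p p2 p' ε' g1 g2 g3 g4 =>
      simp only [Prod.mk.injEq, true_and] at hx
      obtain ⟨rfl, rfl⟩ := hx
      obtain rfl := hE _ _ _ _ h1 g1
      exact absurd g3 (h2 _ g2)
    | leaf p' ε' g => simp at hx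
  | pass2 q q' ε h1 h2 =>
    cases h' with
    | pass1 p p' ε' g1 g2 => simp at hx
    | pass2 p p' ε' g1 g2 =>
      simp only [Prod.mk.injEq, true_and] at hx
      obtain ⟨rfl, rfl⟩ := hx
      rcases rel_tri hrk ε q p with h | h | h
      · exact absurd h (h2 _ g1)
      · rw [h]
      · exact absurd h (g2 _ h1)
    | bnc p p2 p' ε' g1 g2 g3 g4 => simp at hx
    | leaf p' ε' g =>
      simp only [Prod.mk.injEq, true_and] at hx
      obtain ⟨rfl, rfl⟩ := hx
      exact absurd h1 (g _)
  | bnc q q2 q' ε h1 h2 h3 h4 =>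
    cases h' with
    | pass1 p p' ε' g1 g2 =>
      simp only [Prod.mk.injEq, true_and] at hx
      obtain ⟨rfl, rfl⟩ := hx
      obtain rfl := hE _ _ _ _ h1 g1
      exact absurd h3 (g2 _ h2)
    | pass2 p p' ε' g1 g2 => simp at hx
    | bnc p p2 p' ε' g1 g2 g3 g4 =>
      simp only [Prod.mk.injEq, true_and] at hx
      obtain ⟨rfl, rfl⟩ := hx
      obtain rfl := hE _ _ _ _ h1 g1
      rcases rel_tri hrk ε q2 p2 with h | h | h
      · exact absurd (g4 _ h2 h3 h) id
      · rw [h]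
      · exact absurd (h4 _ g2 g3 h) id
    | leaf p' ε' g => simp at hx
  | leaf q' ε h =>
    cases h' with
    | pass1 p p' ε' g1 g2 => simp at hx
    | pass2 p p' ε' g1 g2 =>
      simp only [Prod.mk.injEq, true_and] at hx
      obtain ⟨rfl, rfl⟩ := hx
      exact absurd g1 (h _)
    | bnc p p2 p' ε' g1 g2 g3 g4 => simp at hx
    | leaf p' ε' g =>
      simp only [Prod.mk.injEq, true_and] at hx
      obtain ⟨rfl, rfl⟩ := hx
      rfl

/-- bouncing flips the side of the contour. -/
theorem Cl.flip {a : A} {s : Bool} {x y : Q × Bool} (h : Cl E rk a (s, x) (s, y)) :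
    y.2 = !x.2 := by
  cases h <;> rfl

variable (E rk)

/-- two synchronized climbers. -/
inductive Pr (a : A) : Bool × (Q × Bool) × (Q × Bool) → Bool × (Q × Bool) × (Q × Bool) → Prop
  | both (s s' : Bool) (x y x' y' : Q × Bool) : Cl E rk a (s, x) (s', x') →
      Cl E rk a (s, y) (s', y') → Pr a (s, x, y) (s', x', y')
  | left (s : Bool) (x y x' y' : Q × Bool) : Cl E rk a (s, x) (s, x') →
      Cl E rk a (s, y) (!s, y') → Pr a (s, x, y) (s, x', y)
  | right (s : Bool) (x y x' y' : Q × Bool) : Cl E rk a (s, x) (!s, x') →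
      Cl E rk a (s, y) (s, y') → Pr a (s, x, y) (s, x, y')

variable {E rk}

theorem Pr.symm {a : A} {x y : Bool × (Q × Bool) × (Q × Bool)} (h : Pr E rk a x y) :
    Pr E rk a y x := by
  cases h with
  | both s s' x y x' y' h1 h2 => exact Pr.both _ _ _ _ _ _ h1.symm h2.symm
  | left s x y x' y' h1 h2 => exact Pr.left _ _ _ _ _ h1.symm h2
  | right s x y x' y' h1 h2 => exact Pr.right _ _ _ _ _ h1 h2.symm

theorem Pr.fn (hE : ∀ a q q1 q2, E a q q1 → E a q q2 → q1 = q2) (hrk : Function.Injective rk)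
    {a : A} {x y z : Bool × (Q × Bool) × (Q × Bool)} (h : Pr E rk a x y) (h' : Pr E rk a x z) :
    y = z := by
  generalize hx : x = x1 at h'
  cases h with
  | both s s' x y x' y' h1 h2 =>
    cases h' with
    | both t t' u v u' v' g1 g2 =>
      simp only [Prod.mk.injEq] at hx
      obtain ⟨rfl, rfl, rfl⟩ := hx
      have e1 := h1.fn hE hrk g1
      have e2 := h2.fn hE hrk g2
      simp only [Prod.mk.injEq] at e1 e2 ⊢
      exact ⟨e1.1, e1.2, e2.2⟩
    | left t u v u' v' g1 g2 =>
      simp only [Prod.mk.injEq] at hx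
      obtain ⟨rfl, rfl, rfl⟩ := hx
      have e1 := h1.fn hE hrk g1
      have e2 := h2.fn hE hrk g2
      simp only [Prod.mk.injEq] at e1 e2
      have := e1.1.symm.trans e2.1
      simp at this
    | right t u v u' v' g1 g2 =>
      simp only [Prod.mk.injEq] at hx
      obtain ⟨rfl, rfl, rfl⟩ := hx
      have e1 := h1.fn hE hrk g1
      have e2 := h2.fn hE hrk g2
      simp only [Prod.mk.injEq] at e1 e2
      have := e2.1.symm.trans e1.1
      simp at this
  | left s x y x' y' h1 h2 =>
    cases h' with
    | both t t' u v u' v' g1 g2 =>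
      simp only [Prod.mk.injEq] at hx
      obtain ⟨rfl, rfl, rfl⟩ := hx
      have e1 := h1.fn hE hrk g1
      have e2 := h2.fn hE hrk g2
      simp only [Prod.mk.injEq] at e1 e2
      have := e1.1.trans e2.1.symm
      simp at this
    | left t u v u' v' g1 g2 =>
      simp only [Prod.mk.injEq] at hx
      obtain ⟨rfl, rfl, rfl⟩ := hx
      have e1 := h1.fn hE hrk g1
      simp only [Prod.mk.injEq] at e1 ⊢
      exact ⟨trivial, e1.2, trivial⟩
    | right t u v u' v' g1 g2 =>
      simp only [Prod.mk.injEq] at hx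
      obtain ⟨rfl, rfl, rfl⟩ := hx
      have e1 := h1.fn hE hrk g1
      simp at e1
  | right s x y x' y' h1 h2 =>
    cases h' with
    | both t t' u v u' v' g1 g2 =>
      simp only [Prod.mk.injEq] at hx
      obtain ⟨rfl, rfl, rfl⟩ := hx
      have e1 := h1.fn hE hrk g1
      have e2 := h2.fn hE hrk g2
      simp only [Prod.mk.injEq] at e1 e2
      have := e2.1.trans e1.1.symm
      simp at this
    | left t u v u' v' g1 g2 =>
      simp only [Prod.mk.injEq] at hx
      obtain ⟨rfl, rfl, rfl⟩ := hx
      have e1 := h1.fn hE hrk g1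
      simp at e1
    | right t u v u' v' g1 g2 =>
      simp only [Prod.mk.injEq] at hx
      obtain ⟨rfl, rfl, rfl⟩ := hx
      have e1 := h2.fn hE hrk g2
      simp only [Prod.mk.injEq] at e1 ⊢
      exact ⟨trivial, trivial, e1.2⟩

/-- staying on the same side flips at least one contour side. -/
theorem Pr.flip {a : A} {s : Bool} {x y x' y' : Q × Bool}
    (h : Pr E rk a (s, x, y) (s, x', y')) : x'.2 = !x.2 ∨ y'.2 = !y.2 := by
  cases h with
  | both _ _ _ _ _ _ h1 h2 => exact Or.inl h1.flip
  | left _ _ _ _ _ h1 h2 => exact Or.inl h1.flip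
  | right _ _ _ _ _ h1 h2 => exact Or.inr h2.flip

/-- the synchronization ports. -/
def IsSp (z : Bool × (Q × Bool) × (Q × Bool)) : Prop := ∃ p, z = (true, (p, true), (p, false))

theorem Pr.notSp {a : A} {z z' : Bool × (Q × Bool) × (Q × Bool)} (h : Pr E rk a z z')
    (h1 : IsSp z) : ¬ IsSp z' := by
  rintro ⟨p, rfl⟩
  obtain ⟨p', rfl⟩ := h1
  have := h.flip
  simp at this

/-- behaviour at the left end-marker, single climber. -/
def hat (q0 : Q) (x x' : Q × Bool) : Prop :=
  (x.1 ≠ q0 ∧ x' = (x.1, !x.2)) ∨ (x.1 = q0 ∧ x' = x)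

theorem hat_symm {q0 : Q} {x x' : Q × Bool} (h : hat q0 x x') : hat q0 x' x := by
  rcases h with ⟨h, rfl⟩ | ⟨h, rfl⟩
  · left; simp [h]
  · right; simp [h]

theorem hat_fst {q0 : Q} {x x' : Q × Bool} (h : hat q0 x x') : x'.1 = x.1 := by
  rcases h with ⟨h, rfl⟩ | ⟨h, rfl⟩ <;> rfl

theorem hat_fn {q0 : Q} {x x' x'' : Q × Bool} (h : hat q0 x x') (h' : hat q0 x x'') :
    x' = x'' := by
  rcases h with ⟨h, rfl⟩ | ⟨h, rfl⟩ <;> rcases h' with ⟨h', rfl⟩ | ⟨h', rfl⟩ <;> simp_all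

/-- behaviour at the left end-marker, two climbers. -/
def hat2 (q0 : Q) (z z' : (Q × Bool) × (Q × Bool)) : Prop :=
  ¬ (z.1.1 = q0 ∧ z.2.1 = q0) ∧ hat q0 z.1 z'.1 ∧ hat q0 z.2 z'.2

theorem hat2_symm {q0 : Q} {z z' : (Q × Bool) × (Q × Bool)} (h : hat2 q0 z z') :
    hat2 q0 z' z := by
  obtain ⟨h1, h2, h3⟩ := h
  refine ⟨?_, hat_symm h2, hat_symm h3⟩
  rwa [hat_fst h2, hat_fst h3]

theorem hat2_fn {q0 : Q} {z z' z'' : (Q × Bool) × (Q × Bool)} (h : hat2 q0 z z')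
    (h' : hat2 q0 z z'') : z' = z'' := by
  obtain ⟨h1, h2, h3⟩ := h
  obtain ⟨h1', h2', h3'⟩ := h'
  exact Prod.ext (hat_fn h2 h2') (hat_fn h3 h3')

theorem hat2_irr {q0 : Q} {z : (Q × Bool) × (Q × Bool)} : ¬ hat2 q0 z z := by
  rintro ⟨h1, h2 | h2, h3 | h3⟩
  · have := congrArg Prod.snd h2.2; simp at this
  · have := congrArg Prod.snd h2.2; simp at this
  · have := congrArg Prod.snd h3.2; simp at this
  · exact h1 ⟨h2.1, h3.1⟩

variable (E rk)

/-- the pair machine. -/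
def PStep (q0 : Q) (w : ℕ → A) (c c' : ((Q × Bool) × (Q × Bool)) × Bool × ℕ) : Prop :=
  GStep (O := Unit) (fun a z z' _ => Pr E rk a z z') (hat2 q0) () w c c' ()

/-- nodes strictly on side `β` of the main run `s`, in the tree of the `I`-th node. -/
inductive Up (w : ℕ → A) (s : ℕ → Q) (I : ℕ) (β : Bool) : ℕ → Q → Prop
  | merge (j : ℕ) (q : Q) : j < I → E (w j) q (s (j + 1)) → rel rk β (s j) q → Up w s I β j q
  | step (j : ℕ) (q q' : Q) : j < I → E (w j) q q' → Up w s I β (j + 1) q' → Up w s I β j q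

/-- valid ports of the climber on side `β`. -/
def Val (w : ℕ → A) (s : ℕ → Q) (I : ℕ) (β : Bool) (j : ℕ) (x : Q × Bool) : Prop :=
  x = (s j, β) ∨ Up E rk w s I β j x.1

def sync (s : ℕ → Q) (i : ℕ) : ((Q × Bool) × (Q × Bool)) × Bool × ℕ :=
  (((s i, true), (s i, false)), true, i)

def VV (w : ℕ → A) (s : ℕ → Q) (I : ℕ) : Set (((Q × Bool) × (Q × Bool)) × Bool × ℕ) :=
  {c | c.2.2 ≤ I ∧ Val E rk w s I true c.2.2 c.1.1 ∧ Val E rk w s I false c.2.2 c.1.2}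

variable {E rk}

theorem Up.lt {w : ℕ → A} {s : ℕ → Q} {I : ℕ} {β : Bool} {j : ℕ} {q : Q}
    (h : Up E rk w s I β j q) : j < I := by
  cases h <;> assumption

theorem Up.ne (hE : ∀ a q q1 q2, E a q q1 → E a q q2 → q1 = q2)
    {w : ℕ → A} {s : ℕ → Q} {I : ℕ} (hs : ∀ j < I, E (w j) (s j) (s (j + 1)))
    {β : Bool} {j : ℕ} {q : Q} (h : Up E rk w s I β j q) : q ≠ s j := by
  induction h with
  | merge j q h1 h2 h3 => rintro rfl; exact rel_irr h3
  | step j q q' h1 h2 h3 ih => rintro rfl; exact ih (hE _ _ _ _ h2 (hs _ h1))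

theorem Up.disj (hE : ∀ a q q1 q2, E a q q1 → E a q q2 → q1 = q2)
    {w : ℕ → A} {s : ℕ → Q} {I : ℕ} (hs : ∀ j < I, E (w j) (s j) (s (j + 1)))
    {j : ℕ} {q : Q} (h : Up E rk w s I true j q) (h' : Up E rk w s I false j q) : False := by
  induction h with
  | merge j q h1 h2 h3 =>
    cases h' with
    | merge _ _ g1 g2 g3 => simp only [rel, if_true, Bool.false_eq_true, if_false] at h3 g3; omega
    | step _ _ q' g1 g2 g3 =>
      obtain rfl := hE _ _ _ _ h2 g2
      exact g3.ne hE hs rfl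
  | step j q q' h1 h2 h3 ih =>
    cases h' with
    | merge _ _ g1 g2 g3 =>
      obtain rfl := hE _ _ _ _ h2 g2
      exact h3.ne hE hs rfl
    | step _ _ q'' g1 g2 g3 =>
      obtain rfl := hE _ _ _ _ h2 g2
      exact ih g3

theorem exists_ext [Finite Q] (ε : Bool) (S : Set Q)
    (hS : S.Nonempty) : ∃ q ∈ S, ∀ q2 ∈ S, ¬ rel rk ε q q2 := by
  cases ε with
  | true =>
    obtain ⟨q, h1, h2⟩ := Set.exists_max_image S rk (Set.toFinite S) hS
    refine ⟨q, h1, fun q2 h3 h4 => ?_⟩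
    have := h2 q2 h3
    simp only [rel, if_true] at h4
    omega
  | false =>
    obtain ⟨q, h1, h2⟩ := Set.exists_min_image S rk (Set.toFinite S) hS
    refine ⟨q, h1, fun q2 h3 h4 => ?_⟩
    have := h2 q2 h3
    simp only [rel, Bool.false_eq_true, if_false] at h4
    omega

theorem Cl.closed [Finite Q] (hE : ∀ a q q1 q2, E a q q1 → E a q q2 → q1 = q2)
    (hrk : Function.Injective rk) {w : ℕ → A} {s : ℕ → Q} {I : ℕ}
    (hs : ∀ j < I, E (w j) (s j) (s (j + 1))) (β : Bool) (k : ℕ) (hk : k < I) (d : Bool)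
    (x : Q × Bool) (hx : Val E rk w s I β (gpos k d) x) :
    ∃ d' x', Cl E rk (w k) (d, x) (d', x') ∧ Val E rk w s I β (gpos k d') x' := by
  obtain ⟨q, ε⟩ := x
  cases d with
  | true =>
    simp only [gpos, if_true] at hx
    -- forward
    have hdef : ∃ q', E (w k) q q' := by
      rcases hx with hx | hx
      · simp only [Prod.mk.injEq] at hx
        obtain ⟨rfl, rfl⟩ := hx
        exact ⟨_, hs k hk⟩
      · cases hx with
        | merge _ _ h1 h2 h3 => exact ⟨_, h2⟩
        | step _ _ q' h1 h2 h3 => exact ⟨_, h2⟩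
    obtain ⟨q', hq'⟩ := hdef
    by_cases hp : ∀ q2, E (w k) q2 q' → ¬ rel rk ε q q2
    · refine ⟨false, (q', ε), Cl.pass1 _ _ _ hq' hp, ?_⟩
      simp only [gpos, Bool.false_eq_true, if_false]
      rcases hx with hx | hx
      · simp only [Prod.mk.injEq] at hx
        obtain ⟨rfl, rfl⟩ := hx
        left; rw [hE _ _ _ _ hq' (hs k hk)]
      · cases hx with
        | merge _ _ h1 h2 h3 =>
          left
          obtain rfl := hE _ _ _ _ hq' h2
          have : ε = β := by
            by_contra hne
            have : β = !ε := by cases ε <;> cases β <;> simp_all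
            subst this
            exact hp _ (hs k hk) (rel_not.1 h3)
          rw [this]
        | step _ _ q'' h1 h2 h3 =>
          right
          obtain rfl := hE _ _ _ _ hq' h2
          exact h3
    · push Not at hp
      obtain ⟨q2, ⟨h1, h2⟩, h3⟩ := exists_ext (rk := rk) (!ε) {q2 | E (w k) q2 q' ∧ rel rk ε q q2} hp
      have h3' : ∀ q3, E (w k) q3 q' → rel rk ε q q3 → rel rk ε q3 q2 → False :=
        fun q3 h4 h5 h6 => h3 q3 ⟨h4, h5⟩ (rel_not.2 h6)
      refine ⟨true, (q2, !ε), Cl.bnc _ _ _ _ hq' h1 h2 h3', ?_⟩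
      simp only [gpos, if_true]
      rcases hx with hx | hx
      · simp only [Prod.mk.injEq] at hx
        obtain ⟨rfl, rfl⟩ := hx
        right
        obtain rfl := hE _ _ _ _ hq' (hs k hk)
        exact Up.merge _ _ hk h1 h2
      · cases hx with
        | merge _ _ g1 g2 g3 =>
          obtain rfl := hE _ _ _ _ hq' g2
          by_cases hne : ε = β
          · subst hne
            exact Or.inr (Up.merge _ _ hk h1 (rel_trans g3 h2))
          · have : β = !ε := by cases ε <;> cases β <;> simp_all
            subst this
            rcases rel_tri hrk ε q2 (s k) with h | h | h
            · exact Or.inr (Up.merge _ _ hk h1 (rel_not.2 h))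
            · left; rw [h]
            · exact absurd (h3' _ (hs k hk) (rel_not.1 g3) h) id
        | step _ _ q'' g1 g2 g3 =>
          obtain rfl := hE _ _ _ _ hq' g2
          exact Or.inr (Up.step _ _ _ hk h1 g3)
  | false =>
    simp only [gpos, Bool.false_eq_true, if_false] at hx
    by_cases hl : ∀ p, ¬ E (w k) p q
    · refine ⟨false, (q, !ε), Cl.leaf _ _ hl, ?_⟩
      simp only [gpos, Bool.false_eq_true, if_false]
      rcases hx with hx | hx
      · simp only [Prod.mk.injEq] at hx
        obtain ⟨rfl, rfl⟩ := hx
        exact absurd (hs k hk) (hl _)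
      · exact Or.inr hx
    · push Not at hl
      obtain ⟨p, h1, h2⟩ := exists_ext (rk := rk) ε {p | E (w k) p q} hl
      refine ⟨true, (p, ε), Cl.pass2 _ _ _ h1 h2, ?_⟩
      simp only [gpos, if_true]
      rcases hx with hx | hx
      · simp only [Prod.mk.injEq] at hx
        obtain ⟨rfl, rfl⟩ := hx
        rcases rel_tri hrk ε (s k) p with h | h | h
        · exact Or.inr (Up.merge _ _ hk h1 h)
        · left; rw [h]
        · exact absurd h (h2 _ (hs k hk))
      · exact Or.inr (Up.step _ _ _ hk h1 hx)

theorem Pr.closed [Finite Q] (hE : ∀ a q q1 q2, E a q q1 → E a q q2 → q1 = q2)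
    (hrk : Function.Injective rk) {w : ℕ → A} {s : ℕ → Q} {I : ℕ}
    (hs : ∀ j < I, E (w j) (s j) (s (j + 1))) (k : ℕ) (hk : k < I) (d : Bool)
    (x y : Q × Bool) (hx : Val E rk w s I true (gpos k d) x)
    (hy : Val E rk w s I false (gpos k d) y) :
    ∃ d' x' y', Pr E rk (w k) (d, x, y) (d', x', y') ∧ Val E rk w s I true (gpos k d') x' ∧
      Val E rk w s I false (gpos k d') y' := by
  obtain ⟨d1, x', h1, h2⟩ := Cl.closed hE hrk hs true k hk d x hx
  obtain ⟨d2, y', h3, h4⟩ := Cl.closed hE hrk hs false k hk d y hy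
  by_cases h : d1 = d2
  · subst h
    exact ⟨d1, x', y', Pr.both _ _ _ _ _ _ h1 h3, h2, h4⟩
  · by_cases h' : d1 = d
    · have : d2 = !d := by clear h1 h2 h3 h4 hx hy; revert h h'; cases d <;> cases d1 <;> cases d2 <;> decide
      subst h'; subst this
      exact ⟨d1, x', y, Pr.left _ _ _ _ _ h1 h3, h2, hy⟩
    · have e1 : d2 = d := by clear h1 h2 h3 h4 hx hy; revert h h'; cases d <;> cases d1 <;> cases d2 <;> decide
      have e2 : d1 = !d := by clear h1 h2 h3 h4 hx hy; revert h h'; cases d <;> cases d1 <;> cases d2 <;> decide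
      subst e1; subst e2
      exact ⟨d2, x, y', Pr.right _ _ _ _ _ h1 h3, hx, h4⟩

theorem PStep.symm {q0 : Q} {w : ℕ → A} (c c' : ((Q × Bool) × (Q × Bool)) × Bool × ℕ)
    (h : PStep E rk q0 w c c') : PStep E rk q0 w (grev c') (grev c) :=
  gstep_symm (box := fun a z z' _ => Pr E rk a z z') (mk := hat2 q0)
    (fun _ _ _ _ h => Pr.symm h) (fun _ _ h => hat2_symm h) h

theorem PStep.fn (hE : ∀ a q q1 q2, E a q q1 → E a q q2 → q1 = q2)
    (hrk : Function.Injective rk) {q0 : Q} {w : ℕ → A}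
    (c c' c'' : ((Q × Bool) × (Q × Bool)) × Bool × ℕ)
    (h : PStep E rk q0 w c c') (h' : PStep E rk q0 w c c'') : c' = c'' :=
  (gstep_fun (box := fun a z z' _ => Pr E rk a z z') (mk := hat2 q0) (fun _ _ _ _ _ _ h h' => ⟨Pr.fn hE hrk h h', rfl⟩)
    (fun _ _ _ h h' => hat2_fn h h') h h').1

theorem PStep.irr {q0 : Q} {w : ℕ → A} (c : ((Q × Bool) × (Q × Bool)) × Bool × ℕ) :
    ¬ PStep E rk q0 w c (grev c) := by
  intro h
  unfold PStep at h
  generalize hc : grev c = c' at h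
  cases h with
  | letter k d p d' p' o h =>
    simp only [grev, Prod.mk.injEq, Bool.not_eq_eq_eq_not, Bool.not_not] at hc
    obtain ⟨rfl, rfl, _⟩ := hc
    have := Pr.flip h
    simp at this
  | mark p p' h =>
    simp only [grev, Prod.mk.injEq] at hc
    obtain ⟨rfl, _⟩ := hc
    exact hat2_irr h

theorem PStep.start {w : ℕ → A} {s : ℕ → Q} (c : ((Q × Bool) × (Q × Bool)) × Bool × ℕ) :
    ¬ PStep E rk (s 0) w (grev (sync s 0)) c := by
  intro h
  unfold PStep at h
  generalize hc : grev (sync s 0) = c' at h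
  cases h with
  | letter k d p d' p' o h =>
    simp only [grev, sync, Prod.mk.injEq, Bool.not_true] at hc
    obtain ⟨_, rfl, h⟩ := hc
    simp [gpos] at h
  | mark p p' h =>
    simp only [grev, sync, Prod.mk.injEq] at hc
    obtain ⟨rfl, _⟩ := hc
    exact h.1 ⟨rfl, rfl⟩

theorem VV.finite [Finite Q] (w : ℕ → A) (s : ℕ → Q) (I : ℕ) : (VV E rk w s I).Finite := by
  refine Set.Finite.subset
    (Set.Finite.prod (Set.finite_univ (α := (Q × Bool) × (Q × Bool)))
      (Set.Finite.prod (Set.finite_univ (α := Bool)) (Set.finite_Iic I))) ?_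
  rintro ⟨z, d, j⟩ ⟨h, _⟩
  exact ⟨Set.mem_univ _, Set.mem_univ _, h⟩

theorem VV.closed [Finite Q] (hE : ∀ a q q1 q2, E a q q1 → E a q q2 → q1 = q2)
    (hrk : Function.Injective rk) {w : ℕ → A} {s : ℕ → Q} {I : ℕ}
    (hs : ∀ j < I, E (w j) (s j) (s (j + 1)))
    (c) (hc : c ∈ VV E rk w s I) (h1 : c ≠ sync s I) (h2 : c ≠ grev (sync s 0)) :
    ∃ c' ∈ VV E rk w s I, PStep E rk (s 0) w c c' := by
  obtain ⟨⟨x, y⟩, d, j⟩ := c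
  obtain ⟨hj, hx, hy⟩ := hc
  simp only at hj hx hy
  by_cases hm : d = false ∧ j = 0
  · obtain ⟨rfl, rfl⟩ := hm
    have aux : ∀ β x, Val E rk w s I β 0 x → ∃ x', hat (s 0) x x' ∧ Val E rk w s I β 0 x' := by
      rintro β x (rfl | h)
      · exact ⟨_, Or.inr ⟨rfl, rfl⟩, Or.inl rfl⟩
      · exact ⟨(x.1, !x.2), Or.inl ⟨h.ne hE hs, rfl⟩, Or.inr h⟩
    obtain ⟨x', a1, a2⟩ := aux _ _ hx
    obtain ⟨y', b1, b2⟩ := aux _ _ hy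
    refine ⟨((x', y'), true, 0), ⟨Nat.zero_le _, a2, b2⟩, GStep.mark _ _ ⟨?_, a1, b1⟩⟩
    rintro ⟨e1, e2⟩
    apply h2
    rcases hx with rfl | hx
    · rcases hy with rfl | hy
      · rfl
      · exact absurd e2 (hy.ne hE hs)
    · exact absurd e1 (hx.ne hE hs)
  · have : ∃ k, k < I ∧ j = gpos k d := by
      cases d with
      | true =>
        refine ⟨j, lt_of_le_of_ne hj ?_, by simp [gpos]⟩
        rintro rfl
        apply h1
        rcases hx with rfl | hx
        · rcases hy with rfl | hy
          · rfl
          · exact absurd hy.lt (lt_irrefl _)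
        · exact absurd hx.lt (lt_irrefl _)
      | false =>
        have : j ≠ 0 := fun h => hm ⟨rfl, h⟩
        exact ⟨j - 1, by omega, by simp [gpos]; omega⟩
    obtain ⟨k, hk, rfl⟩ := this
    obtain ⟨d', x', y', g1, g2, g3⟩ := Pr.closed hE hrk hs k hk d x y hx hy
    refine ⟨((x', y'), !d', gpos k d'), ⟨?_, g2, g3⟩, GStep.letter _ _ _ _ _ _ g1⟩
    simp only [gpos]; split <;> omega

/-- valid synchronized configurations are on the main run. -/
theorem VV.main (hE : ∀ a q q1 q2, E a q q1 → E a q q2 → q1 = q2)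
    {w : ℕ → A} {s : ℕ → Q} {I : ℕ}
    (hs : ∀ j < I, E (w j) (s j) (s (j + 1))) {p : Q} {d : Bool} {j : ℕ}
    (h : (((p, true), (p, false)), d, j) ∈ VV E rk w s I) : p = s j ∧ j ≤ I := by
  obtain ⟨hj, hx, hy⟩ := h
  refine ⟨?_, hj⟩
  rcases hx with hx | hx
  · simpa using hx
  · rcases hy with hy | hy
    · simpa using hy
    · exact absurd (hx.disj hE hs hy) id

theorem Up.mono {w : ℕ → A} {s : ℕ → Q} {I : ℕ} {β : Bool} {j : ℕ} {q : Q}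
    (h : Up E rk w s I β j q) : Up E rk w s (I + 1) β j q := by
  induction h with
  | merge j q h1 h2 h3 => exact Up.merge _ _ (by omega) h2 h3
  | step j q q' h1 h2 h3 ih => exact Up.step _ _ _ (by omega) h2 ih

/-- a non-special step of the pair machine. -/
inductive NStep (E : A → Q → Q → Prop) (rk : Q → ℕ) (q0 : Q) (w : ℕ → A) :
    ((Q × Bool) × (Q × Bool)) × Bool × ℕ → ((Q × Bool) × (Q × Bool)) × Bool × ℕ → Prop
  | letter (k : ℕ) (d d' : Bool) (p p') : Pr E rk (w k) (d, p) (d', p') → ¬ IsSp (d, p) →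
      ¬ IsSp (d', p') → NStep E rk q0 w (p, d, gpos k d) (p', !d', gpos k d')
  | mark (p p') : hat2 q0 p p' → NStep E rk q0 w (p, false, 0) (p', true, 0)

theorem NStep.symm {q0 : Q} {w : ℕ → A} {c c' : ((Q × Bool) × (Q × Bool)) × Bool × ℕ}
    (h : NStep E rk q0 w c c') : NStep E rk q0 w (grev c') (grev c) := by
  cases h with
  | letter k d d' p p' h1 h2 h3 =>
    have := NStep.letter (E := E) (rk := rk) (q0 := q0) (w := w) k d' d p' p h1.symm h3 h2
    simpa [grev] using this
  | mark p p' h =>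
    exact NStep.mark (E := E) (rk := rk) (q0 := q0) (w := w) p' p (hat2_symm h)

theorem It.between {C : Type} {f : C → C → Prop} {c0 : C}
    (hf : ∀ c c' c'', f c c' → f c c'' → c' = c'') (g : C → C → Prop) {a : ℕ} {c : C}
    (h : It f c0 a c) : ∀ (n : ℕ) {e : C}, It f c0 (a + n) e →
    (∀ k x y, a ≤ k → k < a + n → It f c0 k x → f x y → g x y) →
    Relation.ReflTransGen g c e := by
  intro n
  induction n with
  | zero =>
    intro e he _
    rw [It.uniq hf h he]
  | succ n ih =>
    intro e he hg
    obtain ⟨d, h1, h2⟩ := It.pred (n := a + n) he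
    exact (ih h1 fun k x y h3 h4 => hg k x y h3 (by omega)).tail
      (hg (a + n) d e (by omega) (by omega) h1 h2)

/-- The core lemma: consecutive synchronizations are connected by non-special steps. -/
theorem core [Finite Q] (hE : ∀ a q q1 q2, E a q q1 → E a q q2 → q1 = q2)
    (hrk : Function.Injective rk) {w : ℕ → A} {s : ℕ → Q} {I : ℕ}
    (hs : ∀ j < I + 1, E (w j) (s j) (s (j + 1))) :
    ∃ d' x' y', Pr E rk (w I) (true, (s I, true), (s I, false)) (d', x', y') ∧
      Relation.ReflTransGen (NStep E rk (s 0) w) ((x', y'), !d', gpos I d') (sync s (I + 1)) := by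
  have hf := PStep.fn (E := E) (rk := rk) (w := w) (q0 := s 0) hE hrk
  have hsy := PStep.symm (E := E) (rk := rk) (w := w) (q0 := s 0)
  have hirr := PStep.irr (E := E) (rk := rk) (w := w) (q0 := s 0)
  have h0 := PStep.start (E := E) (rk := rk) (w := w) (s := s)
  have hmem : ∀ J, sync s 0 ∈ VV E rk w s J := fun J =>
    ⟨Nat.zero_le _, Or.inl rfl, Or.inl rfl⟩
  have hit : ∀ J, J ≤ I + 1 → ∃ n, It (PStep E rk (s 0) w) (sync s 0) n (sync s J) ∧
      ∀ k < n, ∃ c ∈ VV E rk w s J, It (PStep E rk (s 0) w) (sync s 0) k c := by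
    intro J hJ
    exact It.hits hf grev_grev hsy grev_ne hirr h0 _ (VV.finite w s J) _ (hmem J)
      (VV.closed hE hrk fun j hj => hs j (by omega))
  have hlt : ∀ J J', J < J' → ∀ n n', It (PStep E rk (s 0) w) (sync s 0) n' (sync s J') →
      (∀ k < n, ∃ c ∈ VV E rk w s J, It (PStep E rk (s 0) w) (sync s 0) k c) → n ≤ n' := by
    intro J J' hJ n n' h1 h2
    by_contra hcon
    obtain ⟨c, hc, hi⟩ := h2 n' (by omega)
    obtain rfl := It.uniq hf hi h1
    have := hc.1
    simp only [sync] at this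
    omega
  obtain ⟨n, hn1, hn2⟩ := hit I (by omega)
  obtain ⟨n', hn1', hn2'⟩ := hit (I + 1) le_rfl
  have hle := hlt I (I + 1) (by omega) n n' hn1' hn2
  have hne : n ≠ n' := by
    rintro rfl
    have := It.uniq hf hn1 hn1'
    have := congrArg (fun c => c.2.2) this
    simp [sync] at this
  -- first step
  obtain ⟨c1, hc1, hst⟩ : ∃ c1, It (PStep E rk (s 0) w) (sync s 0) (n + 1) c1 ∧
      PStep E rk (s 0) w (sync s I) c1 := by
    have : n + 1 ≤ n' := by omega
    have hex : ∃ c1, It (PStep E rk (s 0) w) (sync s 0) (n + 1) c1 := by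
      rcases Nat.lt_or_eq_of_le this with h | h
      · obtain ⟨c, _, h⟩ := hn2' _ h
        exact ⟨c, h⟩
      · exact ⟨_, h ▸ hn1'⟩
    obtain ⟨c1, h1⟩ := hex
    obtain ⟨d, h2, h3⟩ := h1.pred
    obtain rfl := It.uniq hf h2 hn1
    exact ⟨c1, h1, h3⟩
  have hpr : ∃ d' x' y', Pr E rk (w I) (true, (s I, true), (s I, false)) (d', x', y') ∧
      c1 = ((x', y'), !d', gpos I d') := by
    unfold PStep at hst
    generalize hc : sync s I = c0 at hst
    cases hst with
    | letter k d p d' p' o h =>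
      simp only [sync, Prod.mk.injEq] at hc
      obtain ⟨rfl, rfl, hk⟩ := hc
      simp only [gpos, if_true] at hk
      subst hk
      exact ⟨d', p'.1, p'.2, h, rfl⟩
    | mark p p' h => simp [sync] at hc
  obtain ⟨d', x', y', hp, rfl⟩ := hpr
  refine ⟨d', x', y', hp, ?_⟩
  obtain ⟨m, rfl⟩ : ∃ m, n' = n + 1 + m := ⟨n' - (n + 1), by omega⟩
  refine It.between hf _ hc1 m hn1' ?_
  intro k x y hk1 hk2 hx hxy
  obtain ⟨c, hcV, hi⟩ := hn2' k hk2
  obtain rfl := It.uniq hf hi hx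
  -- y is valid as well
  have hy : It (PStep E rk (s 0) w) (sync s 0) (k + 1) y := It.succ _ _ _ hx hxy
  have hyV : y ∈ VV E rk w s (I + 1) := by
    rcases Nat.lt_or_ge (k + 1) (n + 1 + m) with h | h
    · obtain ⟨c2, hc2V, hi2⟩ := hn2' _ h
      obtain rfl := It.uniq hf hi2 hy
      exact hc2V
    · have : k + 1 = n + 1 + m := by omega
      rw [this] at hy
      obtain rfl := It.uniq hf hy hn1'
      exact ⟨le_rfl, Or.inl rfl, Or.inl rfl⟩
  unfold PStep at hxy
  cases hxy with
  | mark p p' h => exact NStep.mark _ _ h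
  | letter l d p e p' o h =>
    refine NStep.letter _ _ _ _ _ h ?_ ?_
    · rintro ⟨q, hq⟩
      simp only [Prod.mk.injEq] at hq
      obtain ⟨rfl, rfl⟩ := hq
      obtain ⟨rfl, hj⟩ := VV.main hE hs hcV
      simp only [gpos, if_true] at hx hj
      obtain ⟨t, ht1, ht2⟩ := hit l hj
      have hkt : k = t := It.time hf grev_grev hsy h0 hx ht1
      subst hkt
      rcases Nat.lt_trichotomy l I with h | h | h
      · have := hlt l I h k n hn1 ht2
        omega
      · subst h
        have := It.time hf grev_grev hsy h0 hn1 ht1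
        omega
      · obtain rfl : l = I + 1 := by omega
        have := It.time hf grev_grev hsy h0 hn1' ht1
        omega
    · rintro ⟨q, hq⟩
      simp only [Prod.mk.injEq] at hq
      obtain ⟨rfl, rfl⟩ := hq
      obtain ⟨rfl, hj⟩ := VV.main hE hs hyV
      simp only [gpos, if_true] at hy hj
      obtain ⟨t, ht1, ht2⟩ := hit l hj
      exact It.norev hf grev_grev hsy grev_ne hirr ht1 hy

end Climb
/-! ## Part 3: registers -/

section Reg

variable {R B : Type}

theorem parse_exists (l : List (R ⊕ B)) : (∃ b : List B, l = b.map Sum.inr) ∨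
    ∃ (b : List B) (r : R) (β : List (R ⊕ B)), l = b.map Sum.inr ++ Sum.inl r :: β := by
  induction l with
  | nil => exact Or.inl ⟨[], rfl⟩
  | cons x l ih =>
    cases x with
    | inl r => exact Or.inr ⟨[], r, l, rfl⟩
    | inr y =>
      rcases ih with ⟨b, rfl⟩ | ⟨b, r, β, rfl⟩
      · exact Or.inl ⟨y :: b, rfl⟩
      · exact Or.inr ⟨y :: b, r, β, rfl⟩

theorem parse_uniq : ∀ {b b' : List B} {r r' : R} {β β' : List (R ⊕ B)},
    b.map Sum.inr ++ Sum.inl r :: β = b'.map Sum.inr ++ Sum.inl r' :: β' →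
    b = b' ∧ r = r' ∧ β = β'
  | [], [], r, r', β, β', h => by simpa using h
  | [], y :: b', r, r', β, β', h => by simp at h
  | y :: b, [], r, r', β, β', h => by simp at h
  | y :: b, y' :: b', r, r', β, β', h => by
    simp only [List.map_cons, List.cons_append, List.cons.injEq, Sum.inr.injEq] at h
    obtain ⟨rfl, h⟩ := h
    obtain ⟨rfl, h1, h2⟩ := parse_uniq h
    exact ⟨rfl, h1, h2⟩

theorem parse_no {b b' : List B} {r : R} {α β : List (R ⊕ B)}
    (h : α ++ Sum.inl r :: β = b'.map Sum.inr) : False := by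
  have : (Sum.inl r : R ⊕ B) ∈ b'.map Sum.inr := by rw [← h]; simp
  simp at this

theorem map_inr_inj {b b' : List B}
    (h : b.map (Sum.inr : B → R ⊕ B) = b'.map Sum.inr) : b = b' :=
  List.map_injective_iff.2 Sum.inr_injective h

theorem sparse_uniq {b b' : List B} {r r' : R} {β β' : List (R ⊕ B)}
    (h : β ++ Sum.inl r :: b.map Sum.inr = β' ++ Sum.inl r' :: b'.map Sum.inr) :
    b = b' ∧ r = r' := by
  have h1 := congrArg List.reverse h
  simp only [List.reverse_append, List.reverse_cons, List.append_assoc, ← List.map_reverse,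
    List.singleton_append] at h1
  obtain ⟨h2, h3, _⟩ := parse_uniq h1
  exact ⟨List.reverse_injective h2, h3⟩

/-- each register occurs at most at one place. -/
def UParse (σ : R → List (R ⊕ B)) : Prop :=
  ∀ r r0 r0' α α' β β', σ r0 = α ++ Sum.inl r :: β → σ r0' = α' ++ Sum.inl r :: β' →
    r0 = r0' ∧ α = α' ∧ β = β'

theorem occ_append {C : Type} (a : C) (l l' : List C) : occ a (l ++ l') = occ a l + occ a l' := by
  simp [occ]

theorem occ_cons_self {C : Type} (a : C) (l : List C) : occ a (a :: l) = occ a l + 1 := by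
  simp [occ]

theorem copyless_uparse [Fintype R] {σ : R → List (R ⊕ B)} (h : Copyless σ) : UParse σ := by
  classical
  intro r r0 r0' α α' β β' h1 h2
  have hr := h r
  have e1 : 1 ≤ occ (Sum.inl r) (σ r0) := by rw [h1, occ_append, occ_cons_self]; omega
  have e2 : 1 ≤ occ (Sum.inl r) (σ r0') := by rw [h2, occ_append, occ_cons_self]; omega
  have hr0 : r0 = r0' := by
    by_contra hne
    have : ∑ r' ∈ ({r0, r0'} : Finset R), occ (Sum.inl r) (σ r') ≤
        ∑ r' : R, occ (Sum.inl r) (σ r') :=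
      Finset.sum_le_sum_of_subset (Finset.subset_univ _)
    rw [Finset.sum_pair hne] at this
    omega
  subst hr0
  have hle : occ (Sum.inl r) (σ r0) ≤ 1 :=
    le_trans (Finset.single_le_sum (f := fun r' => occ (Sum.inl r) (σ r'))
      (fun _ _ => Nat.zero_le _) (Finset.mem_univ r0)) hr
  refine ⟨rfl, ?_⟩
  have h3 := h1.symm.trans h2
  rcases List.append_eq_append_iff.1 h3 with ⟨l, g1, g2⟩ | ⟨l, g1, g2⟩
  · cases l with
    | nil => simp at g1 g2; exact ⟨g1.symm, g2⟩
    | cons x l =>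
      simp only [List.cons_append, List.cons.injEq] at g2
      obtain ⟨rfl, rfl⟩ := g2
      rw [h1] at hle
      simp only [occ_append, occ_cons_self] at hle
      omega
  · cases l with
    | nil => simp at g1 g2; exact ⟨g1, g2.symm⟩
    | cons x l =>
      simp only [List.cons_append, List.cons.injEq] at g2
      obtain ⟨rfl, rfl⟩ := g2
      rw [h2] at hle
      simp only [occ_append, occ_cons_self] at hle
      omega

/-- The oriented register matching. -/
inductive Rg0 (σ : R → List (R ⊕ B)) : Bool × R × Bool → Bool × R × Bool → List B → Prop
  | mid (r0 r r2 : R) (b : List B) (α β : List (R ⊕ B)) :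
      σ r0 = α ++ Sum.inl r :: (b.map Sum.inr ++ Sum.inl r2 :: β) →
      Rg0 σ (true, r, true) (true, r2, false) b
  | last (r0 r : R) (b : List B) (α : List (R ⊕ B)) :
      σ r0 = α ++ Sum.inl r :: b.map Sum.inr → Rg0 σ (true, r, true) (false, r0, true) b
  | first (r0 r : R) (b : List B) (β : List (R ⊕ B)) :
      σ r0 = b.map Sum.inr ++ Sum.inl r :: β → Rg0 σ (false, r0, false) (true, r, false) b
  | empt (r0 : R) (b : List B) :
      σ r0 = b.map Sum.inr → Rg0 σ (false, r0, false) (false, r0, true) b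

theorem Rg0.fn {σ : R → List (R ⊕ B)} (hσ : UParse σ) {x y y' : Bool × R × Bool} {b b' : List B}
    (h : Rg0 σ x y b) (h' : Rg0 σ x y' b') : y = y' ∧ b = b' := by
  generalize hx : x = x1 at h'
  cases h with
  | mid r0 r r2 b α β h =>
    cases h' with
    | mid s0 s s2 b' α' β' g =>
      simp only [Prod.mk.injEq, true_and, and_true] at hx
      subst hx
      obtain ⟨_, _, e⟩ := hσ _ _ _ _ _ _ _ h g
      obtain ⟨rfl, rfl, _⟩ := parse_uniq e
      exact ⟨rfl, rfl⟩
    | last s0 s b' α' g =>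
      simp only [Prod.mk.injEq, true_and, and_true] at hx
      subst hx
      obtain ⟨_, _, e⟩ := hσ _ _ _ _ _ _ _ h g
      exact absurd (parse_no (b := []) e) id
    | first s0 s b' β' g => simp at hx
    | empt s0 b' g => simp at hx
  | last r0 r b α h =>
    cases h' with
    | mid s0 s s2 b' α' β' g =>
      simp only [Prod.mk.injEq, true_and, and_true] at hx
      subst hx
      obtain ⟨_, _, e⟩ := hσ _ _ _ _ _ _ _ h g
      exact absurd (parse_no (b := []) e.symm) id
    | last s0 s b' α' g =>
      simp only [Prod.mk.injEq, true_and, and_true] at hx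
      subst hx
      obtain ⟨rfl, _, e⟩ := hσ _ _ _ _ _ _ _ h g
      exact ⟨rfl, map_inr_inj e⟩
    | first s0 s b' β' g => simp at hx
    | empt s0 b' g => simp at hx
  | first r0 r b β h =>
    cases h' with
    | mid s0 s s2 b' α' β' g => simp at hx
    | last s0 s b' α' g => simp at hx
    | first s0 s b' β' g =>
      simp only [Prod.mk.injEq, true_and, and_true] at hx
      subst hx
      obtain ⟨rfl, rfl, _⟩ := parse_uniq (h.symm.trans g)
      exact ⟨rfl, rfl⟩
    | empt s0 b' g =>
      simp only [Prod.mk.injEq, true_and, and_true] at hx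
      subst hx
      exact absurd (parse_no (b := []) (h.symm.trans g)) id
  | empt r0 b h =>
    cases h' with
    | mid s0 s s2 b' α' β' g => simp at hx
    | last s0 s b' α' g => simp at hx
    | first s0 s b' β' g =>
      simp only [Prod.mk.injEq, true_and, and_true] at hx
      subst hx
      exact absurd (parse_no (b := []) (g.symm.trans h)) id
    | empt s0 b' g =>
      simp only [Prod.mk.injEq, true_and, and_true] at hx
      subst hx
      exact ⟨rfl, map_inr_inj (h.symm.trans g)⟩

theorem Rg0.cofn {σ : R → List (R ⊕ B)} (hσ : UParse σ) {x x' y : Bool × R × Bool}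
    {b b' : List B} (h : Rg0 σ x y b) (h' : Rg0 σ x' y b') : x = x' ∧ b = b' := by
  generalize hx : y = y1 at h'
  cases h with
  | mid r0 r r2 b α β h =>
    cases h' with
    | mid s0 s s2 b' α' β' g =>
      simp only [Prod.mk.injEq, true_and, and_true] at hx
      subst hx
      rw [← List.cons_append, ← List.append_assoc] at h g
      obtain ⟨_, e, _⟩ := hσ _ _ _ _ _ _ _ h g
      obtain ⟨rfl, rfl⟩ := sparse_uniq e
      exact ⟨rfl, rfl⟩
    | last s0 s b' α' g => simp at hx
    | first s0 s b' β' g =>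
      simp only [Prod.mk.injEq, true_and, and_true] at hx
      subst hx
      rw [← List.cons_append, ← List.append_assoc] at h
      obtain ⟨_, e, _⟩ := hσ _ _ _ _ _ _ _ h g
      exact absurd (parse_no (b := []) e) id
    | empt s0 b' g => simp at hx
  | last r0 r b α h =>
    cases h' with
    | mid s0 s s2 b' α' β' g => simp at hx
    | last s0 s b' α' g =>
      simp only [Prod.mk.injEq, true_and, and_true] at hx
      subst hx
      obtain ⟨rfl, rfl⟩ := sparse_uniq (h.symm.trans g)
      exact ⟨rfl, rfl⟩
    | first s0 s b' β' g => simp at hx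
    | empt s0 b' g =>
      simp only [Prod.mk.injEq, true_and, and_true] at hx
      subst hx
      exact absurd (parse_no (b := []) (h.symm.trans g)) id
  | first r0 r b β h =>
    cases h' with
    | mid s0 s s2 b' α' β' g =>
      simp only [Prod.mk.injEq, true_and, and_true] at hx
      subst hx
      rw [← List.cons_append, ← List.append_assoc] at g
      obtain ⟨_, e, _⟩ := hσ _ _ _ _ _ _ _ h g
      exact absurd (parse_no (b := []) e.symm) id
    | last s0 s b' α' g => simp at hx
    | first s0 s b' β' g =>
      simp only [Prod.mk.injEq, true_and, and_true] at hx
      subst hx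
      obtain ⟨rfl, e, _⟩ := hσ _ _ _ _ _ _ _ h g
      exact ⟨rfl, map_inr_inj e⟩
    | empt s0 b' g => simp at hx
  | empt r0 b h =>
    cases h' with
    | mid s0 s s2 b' α' β' g => simp at hx
    | last s0 s b' α' g =>
      simp only [Prod.mk.injEq, true_and, and_true] at hx
      subst hx
      exact absurd (parse_no (b := []) (g.symm.trans h)) id
    | first s0 s b' β' g => simp at hx
    | empt s0 b' g =>
      simp only [Prod.mk.injEq, true_and, and_true] at hx
      subst hx
      exact ⟨rfl, map_inr_inj (h.symm.trans g)⟩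

theorem Rg0.ori {σ : R → List (R ⊕ B)} {x y : Bool × R × Bool} {b : List B}
    (h : Rg0 σ x y b) : x.1 = x.2.2 ∧ y.1 = !y.2.2 := by
  cases h <;> simp

/-- The register matching. -/
def Rg (σ : R → List (R ⊕ B)) (x y : Bool × R × Bool) (b : List B) : Prop :=
  Rg0 σ x y b ∨ Rg0 σ y x b

theorem Rg.symm {σ : R → List (R ⊕ B)} {x y : Bool × R × Bool} {b : List B} (h : Rg σ x y b) :
    Rg σ y x b := Or.symm h

theorem Rg.fn {σ : R → List (R ⊕ B)} (hσ : UParse σ) {x y y' : Bool × R × Bool} {b b' : List B}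
    (h : Rg σ x y b) (h' : Rg σ x y' b') : y = y' ∧ b = b' := by
  have key : ∀ {y y' : Bool × R × Bool} {b b' : List B}, Rg0 σ x y b → Rg0 σ y' x b' → False := by
    intro y y' b b' h h'
    have h1 := h.ori.1
    have h2 := h'.ori.2
    rw [h1] at h2
    simp at h2
  rcases h with h | h <;> rcases h' with h' | h'
  · exact h.fn hσ h'
  · exact absurd (key h h') id
  · exact absurd (key h' h) id
  · exact h.cofn hσ h'

theorem subApply_append {ν : R → List B} (l l' : List (R ⊕ B)) :
    subApply ν (l ++ l') = subApply ν l ++ subApply ν l' := by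
  induction l with
  | nil => rfl
  | cons x l ih => cases x <;> simp [subApply, ih]

theorem subApply_map {ν : R → List B} (b : List B) : subApply ν (b.map Sum.inr) = b := by
  induction b with
  | nil => rfl
  | cons x l ih => simp [subApply, ih]

end Reg
/-! ## Part 4: the composed machine -/

section Comp

/-- ports of the composed machine -/
abbrev PP (Q R : Type) : Type := ((Q × Bool) × (Q × Bool)) × (R × Bool)

variable {A B : Type} (T : CPSST A B) (rk : T.Q → ℕ)

def EE (a : A) (q q' : T.Q) : Prop := (q, a, q') ∈ T.Δ

def pl (p : T.Q) (d : Bool) (z : (T.Q × Bool) × (T.Q × Bool)) (s : Bool) :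
    Bool × ((T.Q × Bool) × (T.Q × Bool)) :=
  if s then (true, (p, true), (p, false)) else (d, z)

/-- the box of a letter -/
inductive SB (a : A) : Bool × PP T.Q T.R → Bool × PP T.Q T.R →
    List B × Option (T.Q × A × T.Q) → Prop
  | non (u u' : Bool × ((T.Q × Bool) × (T.Q × Bool))) (ρ : T.R × Bool) :
      Pr (EE T) rk a u u' → ¬ IsSp u → ¬ IsSp u' →
      SB a (u.1, u.2, ρ) (u'.1, u'.2, ρ) ([], none)
  | sp (p q : T.Q) (d : Bool) (z : (T.Q × Bool) × (T.Q × Bool)) (s1 s2 : Bool)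
      (ρ1 ρ2 : T.R × Bool) (b : List B) :
      Pr (EE T) rk a (true, (p, true), (p, false)) (d, z) → EE T a p q →
      Rg (T.upd (p, a, q)) (s1, ρ1) (s2, ρ2) b →
      SB a ((pl T p d z s1).1, (pl T p d z s1).2, ρ1)
        ((pl T p d z s2).1, (pl T p d z s2).2, ρ2) (b, some (p, a, q))

/-- the end-marker box -/
def SM (x x' : PP T.Q T.R) : Prop :=
  (hat2 T.init x.1 x'.1 ∧ x'.2 = x.2) ∨
  (x.1 = ((T.init, true), (T.init, false)) ∧ x'.1 = x.1 ∧ x.2.1 ≠ T.outReg ∧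
    x'.2 = (x.2.1, !x.2.2))

variable {T rk}

theorem SB.symm {a : A} {x y : Bool × PP T.Q T.R} {o : List B × Option (T.Q × A × T.Q)}
    (h : SB T rk a x y o) : SB T rk a y x o := by
  cases h with
  | non u u' ρ h1 h2 h3 => exact SB.non _ _ _ h1.symm h3 h2
  | sp p q d z s1 s2 ρ1 ρ2 b h1 h2 h3 => exact SB.sp _ _ _ _ _ _ _ _ _ h1 h2 h3.symm

theorem SM.symm {x y : PP T.Q T.R} (h : SM T x y) : SM T y x := by
  rcases h with ⟨h1, h2⟩ | ⟨h1, h2, h3, h4⟩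
  · exact Or.inl ⟨hat2_symm h1, h2.symm⟩
  · right
    refine ⟨h2.trans h1, h2.symm, ?_, ?_⟩
    · rw [h4]; exact h3
    · rw [h4]; simp

theorem SM.fn {x y y' : PP T.Q T.R} (h : SM T x y) (h' : SM T x y') : y = y' := by
  rcases h with ⟨h1, h2⟩ | ⟨h1, h2, h3, h4⟩ <;> rcases h' with ⟨g1, g2⟩ | ⟨g1, g2, g3, g4⟩
  · exact Prod.ext (hat2_fn h1 g1) (h2.trans g2.symm)
  · exact absurd (by rw [g1]; exact ⟨rfl, rfl⟩) h1.1
  · exact absurd (by rw [h1]; exact ⟨rfl, rfl⟩) g1.1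
  · exact Prod.ext (h2.trans g2.symm) (h4.trans g4.symm)

theorem EE.det (hT : OnewayDet T.toOnewayAut) (a : A) (q q1 q2 : T.Q) (h : EE T a q q1)
    (h' : EE T a q q2) : q1 = q2 := hT _ _ _ _ h h'

theorem SB.fn (hT : OnewayDet T.toOnewayAut) (hrk : Function.Injective rk)
    {a : A} {x y y' : Bool × PP T.Q T.R} {o o' : List B × Option (T.Q × A × T.Q)}
    (h : SB T rk a x y o) (h' : SB T rk a x y' o') : y = y' ∧ o = o' := by
  have hE := EE.det hT
  have key : ∀ {u u' : Bool × ((T.Q × Bool) × (T.Q × Bool))} {p d z s},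
      Pr (EE T) rk a u u' → ¬ IsSp u → ¬ IsSp u' →
      Pr (EE T) rk a (true, (p, true), (p, false)) (d, z) → u = pl T p d z s → False := by
    intro u u' p d z s h1 h2 h3 h4 h5
    cases s with
    | true => exact h2 ⟨p, by rw [h5]; rfl⟩
    | false =>
      have : u = (d, z) := h5
      subst this
      have := h1.fn hE hrk h4.symm
      exact h3 ⟨p, this⟩
  generalize hx : x = x1 at h'
  cases h with
  | non u u' ρ h1 h2 h3 =>
    cases h' with
    | non v v' ρ' g1 g2 g3 =>
      simp only [Prod.mk.injEq] at hx
      obtain ⟨e1, e2, rfl⟩ := hx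
      obtain rfl : u = v := Prod.ext e1 e2
      rw [h1.fn hE hrk g1]
      exact ⟨rfl, rfl⟩
    | sp p q d z s1 s2 ρ1 ρ2 b g1 g2 g3 =>
      simp only [Prod.mk.injEq] at hx
      obtain ⟨e1, e2, rfl⟩ := hx
      exact absurd (key h1 h2 h3 g1 (Prod.ext e1 e2)) id
  | sp p q d z s1 s2 ρ1 ρ2 b h1 h2 h3 =>
    cases h' with
    | non v v' ρ' g1 g2 g3 =>
      simp only [Prod.mk.injEq] at hx
      obtain ⟨e1, e2, rfl⟩ := hx
      exact absurd (key g1 g2 g3 h1 (Prod.ext e1.symm e2.symm)) id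
    | sp p' q' d' z' t1 t2 τ1 τ2 b' g1 g2 g3 =>
      simp only [Prod.mk.injEq] at hx
      obtain ⟨e1, e2, rfl⟩ := hx
      have e : pl T p d z s1 = pl T p' d' z' t1 := Prod.ext e1 e2
      have hp : p = p' ∧ s1 = t1 := by
        cases s1 <;> cases t1
        · have e : (d, z) = (d', z') := e
          rw [← e] at g1
          have := h1.symm.fn hE hrk g1.symm
          simp only [Prod.mk.injEq, true_and, and_true] at this
          exact ⟨this.1, rfl⟩
        · have e : (d, z) = (true, (p', true), (p', false)) := e
          exact absurd ⟨p', e⟩ (h1.notSp ⟨p, rfl⟩)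
        · have e : (true, (p, true), (p, false)) = (d', z') := e
          exact absurd ⟨p, e.symm⟩ (g1.notSp ⟨p', rfl⟩)
        · have e : (true, (p, true), (p, false)) = (true, (p', true), (p', false)) := e
          simp only [Prod.mk.injEq, true_and, and_true] at e
          exact ⟨e.1, rfl⟩
      obtain ⟨rfl, rfl⟩ := hp
      obtain rfl := hE _ _ _ _ h2 g2
      have e3 := h1.fn hE hrk g1
      simp only [Prod.mk.injEq] at e3
      obtain ⟨rfl, rfl⟩ := e3
      have e4 := h3.fn (copyless_uparse (T.copyless _)) g3
      simp only [Prod.mk.injEq] at e4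
      obtain ⟨⟨rfl, rfl⟩, rfl⟩ := e4
      exact ⟨rfl, rfl⟩

variable (T rk)

/-- labelled steps of the composed machine. -/
def SStep (w : ℕ → A) (c c' : PP T.Q T.R × Bool × ℕ) (o : List B × Option (T.Q × A × T.Q)) :
    Prop := GStep (SB T rk) (SM T) ([], none) w c c' o

variable {T rk}

theorem SStep.symm {w : ℕ → A} {c c' : PP T.Q T.R × Bool × ℕ}
    {o : List B × Option (T.Q × A × T.Q)}
    (h : SStep T rk w c c' o) : SStep T rk w (grev c') (grev c) o :=
  gstep_symm (box := SB T rk) (mk := SM T) (fun _ _ _ _ h => SB.symm h) (fun _ _ h => SM.symm h) h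

theorem SStep.fn (hT : OnewayDet T.toOnewayAut) (hrk : Function.Injective rk)
    {w : ℕ → A} {c c' c'' : PP T.Q T.R × Bool × ℕ} {o o' : List B × Option (T.Q × A × T.Q)}
    (h : SStep T rk w c c' o) (h' : SStep T rk w c c'' o') : c' = c'' ∧ o = o' :=
  gstep_fun (box := SB T rk) (mk := SM T) (fun _ _ _ _ _ _ h h' => SB.fn hT hrk h h') (fun _ _ _ h h' => SM.fn h h') h h'

/-- equip a configuration of the pair machine with a register phase. -/
def wr (c : ((T.Q × Bool) × (T.Q × Bool)) × Bool × ℕ) (ρ : T.R × Bool) :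
    PP T.Q T.R × Bool × ℕ := ((c.1, ρ), c.2)

theorem NStep.lift {w : ℕ → A} {c c'} (h : NStep (EE T) rk T.init w c c') (ρ : T.R × Bool) :
    SStep T rk w (wr c ρ) (wr c' ρ) ([], none) := by
  cases h with
  | letter k d d' p p' h1 h2 h3 =>
    exact GStep.letter (box := SB T rk) k d (p, ρ) d' (p', ρ) _ (SB.non (d, p) (d', p') ρ h1 h2 h3)
  | mark p p' h =>
    exact GStep.mark (box := SB T rk) (p, ρ) (p', ρ) (Or.inl ⟨h, rfl⟩)

/-- labels are transitions of the main run -/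
def Good (w : ℕ → A) (s : ℕ → T.Q) (c : PP T.Q T.R × Bool × ℕ)
    (o : List B × Option (T.Q × A × T.Q)) : Prop :=
  ∀ t, o.2 = some t → ∃ j, c.2.2 ≤ j + 1 ∧ t = (s j, w j, s (j + 1))

inductive SPath (T : CPSST A B) (rk : T.Q → ℕ) (w : ℕ → A) (s : ℕ → T.Q) :
    PP T.Q T.R × Bool × ℕ → PP T.Q T.R × Bool × ℕ → List B → Prop
  | refl (c) : SPath T rk w s c c []
  | tail (c c1 c2 b o) : SPath T rk w s c c1 b → SStep T rk w c1 c2 o → Good w s c1 o →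
      SPath T rk w s c c2 (b ++ o.1)

theorem SPath.trans {w : ℕ → A} {s : ℕ → T.Q} {c c1 c2 b b'} (h : SPath T rk w s c c1 b)
    (h' : SPath T rk w s c1 c2 b') : SPath T rk w s c c2 (b ++ b') := by
  induction h' with
  | refl => simpa using h
  | tail c2 c3 b' o h1 h2 h3 ih =>
    rw [← List.append_assoc]
    exact SPath.tail _ _ _ _ _ ih h2 h3

theorem SPath.single {w : ℕ → A} {s : ℕ → T.Q} {c c' o} (h : SStep T rk w c c' o)
    (hg : Good w s c o) : SPath T rk w s c c' o.1 := by
  have := SPath.tail _ _ _ _ _ (SPath.refl c) h hg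
  simpa using this

theorem SPath.lift {w : ℕ → A} {s : ℕ → T.Q} {c c'}
    (h : Relation.ReflTransGen (NStep (EE T) rk T.init w) c c') (ρ : T.R × Bool) :
    SPath T rk w s (wr c ρ) (wr c' ρ) [] ∧ SPath T rk w s (wr (grev c') ρ) (wr (grev c) ρ) [] := by
  induction h with
  | refl => exact ⟨SPath.refl _, SPath.refl _⟩
  | tail h1 h2 ih =>
    constructor
    · exact ih.1.trans (SPath.single (h2.lift ρ) (by intro t ht; simp at ht))
    · exact (SPath.single (h2.symm.lift ρ) (by intro t ht; simp at ht)).trans ih.2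

section Seg

variable {w : ℕ → A} {s : ℕ → T.Q} {i : ℕ} {d : Bool}
  {z : (T.Q × Bool) × (T.Q × Bool)}

/-- configuration at the special edge, on side `x`, leaving. -/
def edgeOut (s : ℕ → T.Q) (i : ℕ) (d : Bool) (z : (T.Q × Bool) × (T.Q × Bool)) (x : Bool) :
    ((T.Q × Bool) × (T.Q × Bool)) × Bool × ℕ :=
  if x then grev (sync s i) else (z, !d, gpos i d)

theorem edge_step (hp : Pr (EE T) rk (w i) (true, (s i, true), (s i, false)) (d, z))
    (hE : EE T (w i) (s i) (s (i + 1))) {x1 x2 : Bool} {ρ1 ρ2 : T.R × Bool} {b : List B}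
    (hr : Rg (T.upd (s i, w i, s (i + 1))) (x1, ρ1) (x2, ρ2) b) :
    SStep T rk w (wr (grev (edgeOut s i d z x1)) ρ1) (wr (edgeOut s i d z x2) ρ2)
      (b, some (s i, w i, s (i + 1))) := by
  have h := SB.sp (rk := rk) (s i) (s (i + 1)) d z x1 x2 ρ1 ρ2 b hp hE hr
  have h' := GStep.letter (mk := SM T) (o0 := ([], none)) (w := w) i _ _ _ _ _ h
  unfold SStep
  cases x1 <;> cases x2 <;>
    simpa [pl, edgeOut, wr, grev, sync, gpos] using h'

theorem edge_path (hp : Pr (EE T) rk (w i) (true, (s i, true), (s i, false)) (d, z))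
    (hE : EE T (w i) (s i) (s (i + 1))) {x1 x2 : Bool} {ρ1 ρ2 : T.R × Bool} {b : List B}
    (hr : Rg (T.upd (s i, w i, s (i + 1))) (x1, ρ1) (x2, ρ2) b) :
    SPath T rk w s (wr (grev (edgeOut s i d z x1)) ρ1) (wr (edgeOut s i d z x2) ρ2) b := by
  refine SPath.single (edge_step hp hE hr) ?_
  intro t ht
  simp only [Option.some.injEq] at ht
  refine ⟨i, ?_, ht.symm⟩
  cases x1 <;> cases d <;> simp [wr, edgeOut, grev, sync, gpos]

/-- reading register `r` at level `i`. -/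
def ReadReg (T : CPSST A B) (rk : T.Q → ℕ) (w : ℕ → A) (s : ℕ → T.Q) (i : ℕ) : Prop :=
  ∀ r, r ≠ T.outReg → SPath T rk w s (wr (grev (sync s i)) (r, false)) (wr (sync s i) (r, true))
    (regVal T w s i r)

theorem out_unique (t : T.Q × A × T.Q) {r0 : T.R} {α β : List (T.R ⊕ B)} (hα : α ≠ [])
    {r : T.R} (h : T.upd t r0 = α ++ Sum.inl r :: β) : r ≠ T.outReg := by
  rintro rfl
  obtain ⟨γ, hγ⟩ := T.out_form t
  have := copyless_uparse (T.copyless t) T.outReg r0 T.outReg α [] β γ h hγ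
  exact hα this.2.1

theorem suffix_path (hp : Pr (EE T) rk (w i) (true, (s i, true), (s i, false)) (d, z))
    (hE : EE T (w i) (s i) (s (i + 1))) (hR : ReadReg T rk w s i) (r0 : T.R) (n : ℕ) :
    ∀ (rest : List (T.R ⊕ B)) (α : List (T.R ⊕ B)) (r1 : T.R), rest.length ≤ n →
      T.upd (s i, w i, s (i + 1)) r0 = α ++ Sum.inl r1 :: rest →
      SPath T rk w s (wr (sync s i) (r1, true)) (wr (edgeOut s i d z false) (r0, true))
        (subApply (regVal T w s i) rest) := by
  induction n with
  | zero =>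
    intro rest α r1 hn h
    obtain rfl : rest = [] := by simpa using hn
    have := edge_path hp hE (Or.inl (Rg0.last r0 r1 [] α h))
    simpa [edgeOut, grev_grev, subApply] using this
  | succ n ih =>
    intro rest α r1 hn h
    rcases parse_exists rest with ⟨b, rfl⟩ | ⟨b, r2, β, rfl⟩
    · have := edge_path hp hE (Or.inl (Rg0.last r0 r1 b α h))
      rw [subApply_map]
      simpa [edgeOut, grev_grev] using this
    · have h1 := edge_path hp hE (Or.inl (Rg0.mid r0 r1 r2 b α β h))
      simp only [edgeOut, if_true, grev_grev] at h1
      have h' : T.upd (s i, w i, s (i + 1)) r0 =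
          (α ++ Sum.inl r1 :: b.map Sum.inr) ++ Sum.inl r2 :: β := by
        rw [h]; simp
      have h2 := hR r2 (out_unique _ (by simp) h')
      have h3 := ih β _ r2 (by simp at hn; omega) h'
      have := h1.trans (h2.trans h3)
      rw [subApply_append, subApply_map]
      exact this

end Seg

variable {w : ℕ → A} {s : ℕ → T.Q}

theorem readReg_all (hT : OnewayDet T.toOnewayAut) (hrk : Function.Injective rk)
    (h0 : s 0 = T.init) (i : ℕ)
    (hs : ∀ j < i, EE T (w j) (s j) (s (j + 1))) : ReadReg T rk w s i := by
  induction i with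
  | zero =>
    intro r hr
    refine SPath.single (o := ([], none)) ?_ (by intro t ht; simp at ht)
    refine GStep.mark (box := SB T rk) _ _ (Or.inr ?_)
    simp [grev, sync, h0, hr]
  | succ i ih =>
    have hR := ih fun j hj => hs j (by omega)
    obtain ⟨d, x, y, hp, hpath⟩ := core (EE.det hT) hrk hs
    rw [h0] at hpath
    have hE := hs i (by omega)
    intro r hr
    have h1 := (SPath.lift (s := s) hpath (r, false)).2
    have h4 := (SPath.lift (s := s) hpath (r, true)).1
    rcases parse_exists (T.upd (s i, w i, s (i + 1)) r) with ⟨b, hb⟩ | ⟨b, r1, β, hb⟩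
    · have h2 := edge_path hp hE (Or.inl (Rg0.empt r b hb))
      simp only [edgeOut, Bool.false_eq_true, if_false] at h2
      have := h1.trans (h2.trans h4)
      simp only [regVal]
      rw [hb, subApply_map]
      simpa using this
    · have h2 := edge_path hp hE (Or.inl (Rg0.first r r1 b β hb))
      simp only [edgeOut, Bool.false_eq_true, if_false, if_true] at h2
      have hr1 : r1 ≠ T.outReg := by
        rintro rfl
        obtain ⟨γ, hγ⟩ := T.out_form (s i, w i, s (i + 1))
        exact hr (copyless_uparse (T.copyless _) T.outReg r T.outReg _ [] _ γ hb hγ).1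
      have h3 := suffix_path hp hE hR r _ β _ r1 le_rfl hb
      simp only [edgeOut, Bool.false_eq_true, if_false] at h3
      have := h1.trans (h2.trans ((hR r1 hr1).trans (h3.trans h4)))
      simp only [regVal]
      rw [hb, subApply_append, subApply_map]
      simpa [subApply] using this

/-- the main segment. -/
theorem segment (hT : OnewayDet T.toOnewayAut) (hrk : Function.Injective rk)
    (h0 : s 0 = T.init) (i : ℕ)
    (hs : ∀ j < i + 1, EE T (w j) (s j) (s (j + 1))) :
    ∃ b, regVal T w s (i + 1) T.outReg = regVal T w s i T.outReg ++ b ∧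
      SPath T rk w s (wr (sync s i) (T.outReg, true)) (wr (sync s (i + 1)) (T.outReg, true)) b := by
  have hR := readReg_all hT hrk h0 i fun j hj => hs j (by omega)
  obtain ⟨d, x, y, hp, hpath⟩ := core (EE.det hT) hrk hs
  rw [h0] at hpath
  have hE := hs i (by omega)
  obtain ⟨γ, hγ⟩ := T.out_form (s i, w i, s (i + 1))
  have h4 := (SPath.lift (s := s) hpath (T.outReg, true)).1
  have h3 := suffix_path hp hE hR T.outReg _ γ [] T.outReg le_rfl hγ
  refine ⟨subApply (regVal T w s i) γ, ?_, ?_⟩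
  · simp only [regVal]
    rw [hγ]
    rfl
  · simp only [edgeOut, Bool.false_eq_true, if_false] at h3
    simpa using h3.trans h4

/-- leaving a synchronization uses the label of the main run. -/
theorem sync_step {p : T.Q} {i : ℕ} {ρ : T.R × Bool} {c o}
    (h : SStep T rk w ((((p, true), (p, false)), ρ), true, i) c o) :
    ∃ q, EE T (w i) p q ∧ o.2 = some (p, w i, q) := by
  unfold SStep at h
  generalize hc : ((((p, true), (p, false)), ρ), true, i) = c0 at h
  cases h with
  | letter k d x d' x' o h =>
    simp only [Prod.mk.injEq] at hc
    obtain ⟨rfl, rfl, hk⟩ := hc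
    simp only [gpos, if_true] at hk
    subst hk
    generalize hc : (true, ((p, true), (p, false)), ρ) = c0 at h
    generalize (d', x') = c1 at h
    cases h with
    | non u u' ρ h1 h2 h3 =>
      simp only [Prod.mk.injEq] at hc
      exact absurd ⟨p, Prod.ext hc.1.symm hc.2.1.symm⟩ h2
    | sp p' q d z s1 s2 ρ1 ρ2 b h1 h2 h3 =>
      simp only [Prod.mk.injEq] at hc
      obtain ⟨e1, e2, _⟩ := hc
      cases s1 with
      | true =>
        simp only [pl, if_true, Prod.mk.injEq, and_true] at e2
        obtain ⟨rfl, _⟩ := e2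
        exact ⟨q, h2, rfl⟩
      | false =>
        simp only [pl, Bool.false_eq_true, if_false] at e1 e2
        exact absurd ⟨p, by rw [← e1, ← e2]⟩ (h1.notSp ⟨p', rfl⟩)
  | mark x x' h => simp at hc

end Comp
/-! ## Part 5: runs -/

section Runs

variable {A B : Type} {T : CPSST A B} {rk : T.Q → ℕ} {w : ℕ → A}

/-- unlabelled steps -/
def UStep (T : CPSST A B) (rk : T.Q → ℕ) (w : ℕ → A) (c c' : PP T.Q T.R × Bool × ℕ) : Prop :=
  ∃ o, SStep T rk w c c' o

/-- the initial configuration -/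
def cini (T : CPSST A B) : PP T.Q T.R × Bool × ℕ :=
  ((((T.init, true), (T.init, false)), (T.outReg, true)), true, 0)

theorem cini_eq {s : ℕ → T.Q} (h0 : s 0 = T.init) : wr (sync s 0) (T.outReg, true) = cini T := by
  simp [wr, sync, cini, h0]

theorem cini_rev (c) : ¬ UStep T rk w (grev (cini T)) c := by
  rintro ⟨o, h⟩
  unfold SStep at h
  generalize hc : grev (cini T) = c0 at h
  cases h with
  | letter k d x d' x' o h =>
    simp only [grev, cini, Prod.mk.injEq] at hc
    obtain ⟨_, rfl, hk⟩ := hc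
    simp [gpos] at hk
  | mark x x' h =>
    simp only [grev, cini, Prod.mk.injEq] at hc
    obtain ⟨rfl, _⟩ := hc
    rcases h with ⟨h1, h2⟩ | ⟨h1, h2, h3, h4⟩
    · exact h1.1 ⟨rfl, rfl⟩
    · exact h3 rfl

theorem SPath.it {s : ℕ → T.Q} {c c' b} (h : SPath T rk w s c c' b) {c0 n}
    (h0 : It (UStep T rk w) c0 n c) : ∃ m, It (UStep T rk w) c0 m c' := by
  induction h with
  | refl => exact ⟨n, h0⟩
  | tail c1 c2 b o h1 h2 h3 ih =>
    obtain ⟨m, hm⟩ := ih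
    exact ⟨m + 1, It.succ _ _ _ hm ⟨o, h2⟩⟩

theorem It.down {C : Type} {f : C → C → Prop} {c0 : C} {n m : ℕ} {c : C} (h : It f c0 (n + m) c) :
    ∃ d, It f c0 n d := by
  induction m generalizing c with
  | zero => exact ⟨c, h⟩
  | succ m ih =>
    obtain ⟨d, h1, _⟩ := It.pred (n := n + m) h
    exact ih h1

theorem UStep.fn (hT : OnewayDet T.toOnewayAut) (hrk : Function.Injective rk) (c c' c'')
    (h : UStep T rk w c c') (h' : UStep T rk w c c'') : c' = c'' := by
  obtain ⟨o, h⟩ := h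
  obtain ⟨o', h'⟩ := h'
  exact (h.fn hT hrk h').1

/-- an accepting-agnostic labelled run -/
def LRun (T : CPSST A B) (rk : T.Q → ℕ) (w : ℕ → A) (g : ℕ → PP T.Q T.R × Bool × ℕ)
    (o : ℕ → List B × Option (T.Q × A × T.Q)) : Prop :=
  g 0 = cini T ∧ ∀ k, SStep T rk w (g k) (g (k + 1)) (o k)

theorem exists_run (hT : OnewayDet T.toOnewayAut) (hrk : Function.Injective rk) {s : ℕ → T.Q}
    (h0 : s 0 = T.init) (hs : ∀ j, EE T (w j) (s j) (s (j + 1))) :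
    ∃ g o, LRun T rk w g o := by
  have h1 : ∀ i, ∃ n, It (UStep T rk w) (cini T) n (wr (sync s i) (T.outReg, true)) := by
    intro i
    induction i with
    | zero => exact ⟨0, by rw [cini_eq h0]; exact It.zero⟩
    | succ i ih =>
      obtain ⟨n, hn⟩ := ih
      obtain ⟨b, _, hb⟩ := segment (rk := rk) hT hrk h0 i (fun j _ => hs j)
      exact hb.it hn
  choose κ hκ using h1
  have hinj : Function.Injective κ := by
    intro i j hij
    have h2 := hκ i
    rw [hij] at h2
    have := It.uniq (UStep.fn hT hrk) h2 (hκ j)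
    have := congrArg (fun c => c.2.2) this
    simpa [wr, sync] using this
  have h2 : ∀ n, ∃ c, It (UStep T rk w) (cini T) n c := by
    intro n
    obtain ⟨i, hi⟩ := (hinj.nat_tendsto_atTop.eventually_ge_atTop n).exists
    obtain ⟨m, hm⟩ := Nat.exists_eq_add_of_le hi
    have := hκ i
    rw [hm] at this
    exact this.down
  choose g hg using h2
  have h3 : ∀ k, UStep T rk w (g k) (g (k + 1)) := by
    intro k
    obtain ⟨d, h4, h5⟩ := (hg (k + 1)).pred
    rwa [It.uniq (UStep.fn hT hrk) (hg k) h4]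
  choose o ho using h3
  refine ⟨g, o, ?_, ho⟩
  exact It.uniq (UStep.fn hT hrk) (hg 0) It.zero

variable {g : ℕ → PP T.Q T.R × Bool × ℕ} {o : ℕ → List B × Option (T.Q × A × T.Q)}

theorem LRun.follow (hT : OnewayDet T.toOnewayAut) (hrk : Function.Injective rk)
    (hr : LRun T rk w g o) {s : ℕ → T.Q} {c c' b} (h : SPath T rk w s c c' b) {k : ℕ}
    (hk : g k = c) :
    ∃ n, g n = c' ∧ prefixCat (fun i => (o i).1) n = prefixCat (fun i => (o i).1) k ++ b ∧
      ∀ j, k ≤ j → j < n → Good w s (g j) (o j) := by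
  induction h with
  | refl => exact ⟨k, hk, by simp, fun j h1 h2 => by omega⟩
  | tail c1 c2 b o' h1 h2 h3 ih =>
    obtain ⟨n, hn, hp, hg⟩ := ih
    have h4 := hr.2 n
    rw [hn] at h4
    obtain ⟨e1, e2⟩ := h4.fn hT hrk h2
    refine ⟨n + 1, e1, ?_, ?_⟩
    · simp only [prefixCat]
      rw [hp, e2, List.append_assoc]
    · intro j h5 h6
      by_cases h7 : j < n
      · exact hg j h5 h7
      · obtain rfl : j = n := by omega
        rw [hn, e2]; exact h3

theorem LRun.reach (hT : OnewayDet T.toOnewayAut) (hrk : Function.Injective rk)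
    (hr : LRun T rk w g o) {s : ℕ → T.Q} (h0 : s 0 = T.init) (i : ℕ)
    (hs : ∀ j < i, EE T (w j) (s j) (s (j + 1))) :
    ∃ n, g n = wr (sync s i) (T.outReg, true) ∧
      prefixCat (fun i => (o i).1) n = regVal T w s i T.outReg ∧
      ∀ j, j < n → Good w s (g j) (o j) := by
  induction i with
  | zero => exact ⟨0, by rw [cini_eq h0, hr.1], by simp [prefixCat, regVal], by intro j h; omega⟩
  | succ i ih =>
    obtain ⟨n, h1, h2, h3⟩ := ih fun j hj => hs j (by omega)
    obtain ⟨b, hb, hp⟩ := segment (rk := rk) hT hrk h0 i hs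
    obtain ⟨m, h4, h5, h6⟩ := hr.follow hT hrk hp h1
    refine ⟨m, h4, ?_, ?_⟩
    · rw [h5, h2, hb]
    · intro j hj
      by_cases h7 : j < n
      · exact h3 j h7
      · exact h6 j (by omega) hj

open Classical in
/-- the run of the one-way automaton, totalized. -/
noncomputable def trun (T : CPSST A B) (w : ℕ → A) : ℕ → T.Q
  | 0 => T.init
  | i + 1 => if h : ∃ q, EE T (w i) (trun T w i) q then h.choose else T.init

theorem LRun.trun (hT : OnewayDet T.toOnewayAut) (hrk : Function.Injective rk)
    (hr : LRun T rk w g o) : ∀ i, EE T (w i) (trun T w i) (trun T w (i + 1)) := by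
  intro i
  induction i using Nat.strong_induction_on with
  | _ i ih =>
    obtain ⟨n, h1, _, _⟩ := hr.reach hT hrk (s := Paper.trun T w) (by rw [Paper.trun]) i ih
    have h2 := hr.2 n
    rw [h1] at h2
    obtain ⟨q, hq, _⟩ := sync_step h2
    have h3 : ∃ q, EE T (w i) (Paper.trun T w i) q := ⟨q, hq⟩
    have := h3.choose_spec
    rw [Paper.trun, dif_pos h3]
    exact this

/-- everything about a run of the composed machine over a run of `T`. -/
theorem LRun.all (hT : OnewayDet T.toOnewayAut) (hrk : Function.Injective rk)
    (hr : LRun T rk w g o) {s : ℕ → T.Q} (h0 : s 0 = T.init)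
    (hs : ∀ j, EE T (w j) (s j) (s (j + 1))) :
    ∃ κ : ℕ → ℕ, Function.Injective κ ∧ (∀ i, g (κ i) = wr (sync s i) (T.outReg, true)) ∧
      (∀ i, prefixCat (fun i => (o i).1) (κ i) = regVal T w s i T.outReg) ∧
      (∀ i, (o (κ i)).2 = some (s i, w i, s (i + 1))) ∧
      (∀ j, Good w s (g j) (o j)) ∧
      Filter.Tendsto (fun j => (g j).2.2) Filter.atTop Filter.atTop := by
  choose κ h1 h2 h3 using fun i => hr.reach hT hrk h0 i fun j _ => hs j
  have hinj : Function.Injective κ := by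
    intro i j hij
    have h4 := h1 i
    rw [hij, h1 j] at h4
    have := congrArg (fun c => c.2.2) h4
    exact (by simpa [wr, sync] using this : j = i).symm
  refine ⟨κ, hinj, h1, h2, ?_, ?_, ?_⟩
  · intro i
    have h4 := hr.2 (κ i)
    rw [h1 i] at h4
    obtain ⟨q, hq, ho⟩ := sync_step h4
    rw [ho, EE.det hT _ _ _ _ hq (hs i)]
  · intro j
    obtain ⟨i, hi⟩ := (hinj.nat_tendsto_atTop.eventually_ge_atTop (j + 1)).exists
    exact h3 i j (by omega)
  · have hit : ∀ k, It (UStep T rk w) (cini T) k (g k) := by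
      intro k
      induction k with
      | zero => rw [hr.1]; exact It.zero
      | succ k ih => exact It.succ _ _ _ ih ⟨_, hr.2 k⟩
    have hgi : Function.Injective g := by
      intro a b hab
      have h4 := hit a
      rw [hab] at h4
      refine It.time (rev := grev) (UStep.fn hT hrk) grev_grev ?_ cini_rev h4 (hit b)
      rintro c c' ⟨o, ho⟩
      exact ⟨o, ho.symm⟩
    rw [Filter.tendsto_atTop]
    intro N
    have hfin : {c : PP T.Q T.R × Bool × ℕ | c.2.2 < N}.Finite := by
      have : {c : PP T.Q T.R × Bool × ℕ | c.2.2 < N} ⊆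
          (Set.univ : Set (PP T.Q T.R)) ×ˢ ((Set.univ : Set Bool) ×ˢ Set.Iio N) := by
        intro c hc
        exact ⟨trivial, trivial, hc⟩
      refine Set.Finite.subset ?_ this
      exact Set.finite_univ.prod (Set.finite_univ.prod (Set.finite_Iio N))
    have h5 := hfin.preimage (f := g) hgi.injOn
    have h6 := h5.compl_mem_cofinite
    rw [Nat.cofinite_eq_atTop] at h6
    filter_upwards [h6] with k hk
    have hk : ¬ (g k).2.2 < N := hk
    omega

end Runs

section Final

variable {A B : Type} (T : CPSST A B) (rk : T.Q → ℕ)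

/-- labelled transitions -/
def TR (t : (PP T.Q T.R × Bool) × Option A × (PP T.Q T.R × Bool))
    (o : List B × Option (T.Q × A × T.Q)) : Prop :=
  match t.2.1 with
  | some a => SB T rk a (t.1.2, t.1.1) (!t.2.2.2, t.2.2.1) o
  | none => t.1.2 = false ∧ t.2.2.2 = true ∧ SM T t.1.1 t.2.2.1 ∧ o = ([], none)

open Classical in
/-- the label of a transition -/
noncomputable def lab (t : (PP T.Q T.R × Bool) × Option A × (PP T.Q T.R × Bool)) :
    List B × Option (T.Q × A × T.Q) :=
  if h : ∃ o, TR T rk t o then h.choose else ([], none)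

variable {T rk}

theorem TR.uniq (hT : OnewayDet T.toOnewayAut) (hrk : Function.Injective rk) {t o o'}
    (h : TR T rk t o) (h' : TR T rk t o') : o = o' := by
  obtain ⟨p, a, q⟩ := t
  cases a with
  | some a => exact (SB.fn hT hrk h h').2
  | none => exact h.2.2.2.trans h'.2.2.2.symm

theorem TR.lab (hT : OnewayDet T.toOnewayAut) (hrk : Function.Injective rk) {t o}
    (h : TR T rk t o) : lab T rk t = o := by
  have h1 : ∃ o, TR T rk t o := ⟨o, h⟩
  rw [Paper.lab, dif_pos h1]
  exact TR.uniq hT hrk h1.choose_spec h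

variable (T rk)

/-- The composed machine. -/
noncomputable def mach (K : ℕ) : TwoWayTrans A B where
  Q := PP T.Q T.R × Bool
  finQ := inferInstance
  fwd := fun s => s.2 = true
  init := ((((T.init, true), (T.init, false)), (T.outReg, true)), true)
  init_fwd := rfl
  Δ := {t | ∃ o, TR T rk t o}
  marker := by
    rintro p q ⟨o, h1, h2, _⟩
    exact ⟨by simpa using h1, h2⟩
  CIdx := T.CIdx
  finC := inferInstance
  color := fun c t => match (lab T rk t).2 with
    | some u => T.color c u
    | none => K
  out := fun t => (lab T rk t).1

variable {T rk} {K : ℕ}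

theorem mach_rev (hT : OnewayDet T.toOnewayAut) (hrk : Function.Injective rk) :
    Reversible (mach T rk K).toTwoWayAut := by
  constructor
  · rintro p a q q' ⟨o, h⟩ ⟨o', h'⟩
    cases a with
    | some a =>
      have h1 := (SB.fn hT hrk h h').1
      simp only [Prod.mk.injEq] at h1
      have h2 : q.2 = q'.2 := by simpa using h1.1
      exact Prod.ext h1.2 h2
    | none =>
      exact Prod.ext (SM.fn h.2.2.1 h'.2.2.1) (h.2.1.trans h'.2.1.symm)
  · rintro p p' a q ⟨o, h⟩ ⟨o', h'⟩
    cases a with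
    | some a =>
      have h1 := (SB.fn hT hrk (SB.symm h) (SB.symm h')).1
      simp only [Prod.mk.injEq] at h1
      exact Prod.ext h1.2 h1.1
    | none =>
      exact Prod.ext (SM.fn (SM.symm h.2.2.1) (SM.symm h'.2.2.1)) (h.1.trans h'.1.symm)

/-- translation of configurations -/
def cfgT (c : (PP T.Q T.R × Bool) × ℕ) : PP T.Q T.R × Bool × ℕ := (c.1.1, c.1.2, c.2)

theorem step_to (hT : OnewayDet T.toOnewayAut) (hrk : Function.Injective rk) {w : ℕ → A}
    {c t c'} (h : StepVia (mach T rk K).toTwoWayAut w c t c') :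
    SStep T rk w (cfgT c) (cfgT c') (lab T rk t) := by
  obtain ⟨⟨p, d⟩, k⟩ := c
  obtain ⟨⟨p', d'⟩, k'⟩ := c'
  obtain ⟨t1, a, t2⟩ := t
  obtain ⟨⟨o, ho⟩, h1, h2, h3⟩ := h
  have hl := TR.lab hT hrk ho
  simp only at h1 h2
  subst h1 h2
  rw [hl]
  have f1 : ∀ x : PP T.Q T.R × Bool, (mach T rk K).fwd x ↔ x.2 = true := fun _ => Iff.rfl
  simp only [f1] at h3
  rcases h3 with ⟨rfl, rfl, h5⟩ | ⟨h4, h6, rfl, h5⟩ | ⟨h4, rfl, rfl, rfl⟩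
  · have h7 := GStep.letter (mk := SM T) (o0 := ([], none)) (w := w) k true p (!d') p' o ho
    rcases h5 with ⟨rfl, rfl⟩ | ⟨h8, rfl⟩
    · simpa [gpos, cfgT, SStep] using h7
    · obtain rfl : d' = false := by simpa using h8
      simpa [gpos, cfgT, SStep] using h7
  · obtain rfl : d = false := by simpa using h4
    obtain ⟨k, rfl⟩ := Nat.exists_eq_succ_of_ne_zero h6.ne'
    have h7 := GStep.letter (mk := SM T) (o0 := ([], none)) (w := w) k false p (!d') p' o ho
    rcases h5 with ⟨rfl, rfl⟩ | ⟨h8, rfl⟩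
    · simpa [gpos, cfgT, SStep] using h7
    · obtain rfl : d' = false := by simpa using h8
      simpa [gpos, cfgT, SStep] using h7
  · obtain ⟨h5, h6, h7, rfl⟩ := ho
    simp only at h5 h6 h7
    subst h5 h6
    exact GStep.mark (box := SB T rk) p p' h7

theorem step_from (hT : OnewayDet T.toOnewayAut) (hrk : Function.Injective rk) {w : ℕ → A}
    {c c' o} (h : SStep T rk w c c' o) :
    ∃ t, StepVia (mach T rk K).toTwoWayAut w ((c.1, c.2.1), c.2.2) t ((c'.1, c'.2.1), c'.2.2) ∧
      lab T rk t = o := by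
  have f1 : ∀ x : PP T.Q T.R × Bool, (mach T rk K).fwd x ↔ x.2 = true := fun _ => Iff.rfl
  cases h with
  | letter k d p d' p' o h =>
    have h1 : TR T rk ((p, d), some (w k), (p', !d')) o := by simpa [TR] using h
    refine ⟨((p, d), some (w k), (p', !d')), ⟨⟨o, h1⟩, rfl, rfl, ?_⟩, TR.lab hT hrk h1⟩
    simp only [f1]
    cases d <;> cases d' <;> simp [gpos]
  | mark p p' h =>
    have h1 : TR T rk ((p, false), none, (p', true)) ([], none) := ⟨rfl, rfl, h, rfl⟩
    refine ⟨((p, false), none, (p', true)), ⟨⟨_, h1⟩, rfl, rfl, ?_⟩, TR.lab hT hrk h1⟩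
    simp only [f1]
    simp

end Final
section Last

variable {A B : Type} {T : CPSST A B} {rk : T.Q → ℕ} {K : ℕ} {w : ℕ → A}

theorem prefixCat_mono {C : Type} (f : ℕ → List C) {n m : ℕ} (h : n ≤ m) :
    prefixCat f n <+: prefixCat f m := by
  induction m, h using Nat.le_induction with
  | base => exact List.prefix_rfl
  | succ m _ ih => exact ih.trans (List.prefix_append _ _)

theorem IsPrefixOf.mono {C : Type} {l l' : List C} {x : ℕ → C} (h : l <+: l')
    (h' : IsPrefixOf l' x) : IsPrefixOf l x := by
  intro i hi
  rw [← h' i (lt_of_lt_of_le hi h.length_le)]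
  simp only [List.get_eq_getElem]
  exact h.getElem hi

/-- pigeonhole -/
theorem exists_infOften {X Y : Type} [Finite X] (tr : ℕ → X) (F : X → Y) (y : Y)
    (h : InfOften (fun i => F (tr i)) y) : ∃ x, InfOften tr x ∧ F x = y := by
  by_contra hcon
  push Not at hcon
  have h1 : ∀ x, F x = y → ∃ n, ∀ i, n ≤ i → tr i ≠ x := by
    intro x hx
    by_contra h2
    push Not at h2
    exact hcon x h2 hx
  choose! N hN using h1
  have := Fintype.ofFinite X
  obtain ⟨i, hi, hy⟩ := h (∑ x, N x)
  refine hN (tr i) hy i ?_ rfl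
  exact (Finset.single_le_sum (fun _ _ => Nat.zero_le _) (Finset.mem_univ (tr i))).trans hi

theorem sInf_aux {S S' : Set ℕ} {K : ℕ} (h1 : S' ⊆ S) (h2 : ∀ m ∈ S, m ∈ S' ∨ m = K)
    (h3 : ∀ m ∈ S', m < K) (h4 : S'.Nonempty) : sInf S = sInf S' := by
  apply le_antisymm
  · exact Nat.sInf_le (h1 (Nat.sInf_mem h4))
  · rcases h2 _ (Nat.sInf_mem (h4.mono h1)) with h | h
    · exact Nat.sInf_le h
    · rw [h]; exact (h3 _ (Nat.sInf_mem h4)).le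

theorem run_of {cfg : ℕ → (PP T.Q T.R × Bool) × ℕ}
    {tr : ℕ → (PP T.Q T.R × Bool) × Option A × (PP T.Q T.R × Bool)}
    (hT : OnewayDet T.toOnewayAut) (hrk : Function.Injective rk)
    (h : IsRun (mach T rk K).toTwoWayAut w cfg tr) :
    LRun T rk w (fun k => cfgT (cfg k)) (fun k => lab T rk (tr k)) := by
  refine ⟨?_, fun k => step_to hT hrk (h.2 k)⟩
  show cfgT (cfg 0) = _
  rw [h.1]
  rfl

theorem run_main [Fintype A] (hT : OnewayDet T.toOnewayAut) (hrk : Function.Injective rk)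
    (hK : ∀ c t, T.color c t < K)
    {cfg : ℕ → (PP T.Q T.R × Bool) × ℕ}
    {tr : ℕ → (PP T.Q T.R × Bool) × Option A × (PP T.Q T.R × Bool)}
    (h : IsRun (mach T rk K).toTwoWayAut w cfg tr) {s : ℕ → T.Q}
    (hs : OnewayRun T.toOnewayAut w s) (x : ℕ → B) :
    ReadsWhole (mach T rk K).toTwoWayAut cfg ∧
    (ParityCond (mach T rk K).toParityAut tr ↔
      OnewayParityCond T.toOnewayAut (fun i => (s i, w i, s (i + 1)))) ∧
    (FlattenTo (fun i => (mach T rk K).out (tr i)) x ↔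
      (∀ i, IsPrefixOf (regVal T w s i T.outReg) x) ∧
      (∀ m, ∃ i, m ≤ (regVal T w s i T.outReg).length)) := by
  obtain ⟨κ, hinj, h1, h2, h3, h4, h5⟩ := (run_of hT hrk h).all hT hrk hs.1 hs.2
  have hκ := hinj.nat_tendsto_atTop
  refine ⟨?_, ?_, ?_⟩
  · intro n
    exact (h5.eventually_ge_atTop n).exists
  · refine forall_congr' fun c => ?_
    have key : sInf {m : ℕ | ∃ t, InfOften tr t ∧ (mach T rk K).color c t = m} =
        sInf {m : ℕ | ∃ t, InfOften (fun i => (s i, w i, s (i + 1))) t ∧ T.color c t = m} := by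
      apply sInf_aux (K := K)
      · rintro m ⟨t, ht, rfl⟩
        have h6 : InfOften (fun i => (lab T rk (tr i)).2) (some t) := by
          intro n
          obtain ⟨M, hM⟩ := Filter.eventually_atTop.1 (hκ.eventually_ge_atTop n)
          obtain ⟨i, hi, hti⟩ := ht M
          exact ⟨κ i, hM i hi, by rw [← hti]; exact h3 i⟩
        obtain ⟨u, hu, hu'⟩ := exists_infOften tr (fun t => (lab T rk t).2) (some t) h6
        refine ⟨u, hu, ?_⟩
        simp only [mach, hu']
      · rintro m ⟨t, ht, rfl⟩
        rcases h6 : (lab T rk t).2 with _ | u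
        · right
          simp only [mach, h6]
        · left
          refine ⟨u, ?_, by simp only [mach, h6]⟩
          intro n
          obtain ⟨M, hM⟩ := Filter.eventually_atTop.1 (h5.eventually_ge_atTop (n + 1))
          obtain ⟨i, hi, hti⟩ := ht M
          obtain ⟨j, hj, hj'⟩ := h4 i u (by simp only [hti]; exact h6)
          have := hM i hi
          exact ⟨j, by omega, hj'.symm⟩
      · rintro m ⟨t, ht, rfl⟩
        exact hK c t
      · obtain ⟨t, ht, _⟩ := exists_infOften (fun i => (s i, w i, s (i + 1))) (fun _ => ()) ()
          (fun n => ⟨n, le_rfl, rfl⟩)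
        exact ⟨_, t, ht, rfl⟩
    exact iff_of_eq (congrArg Even key)
  · have h6 : ∀ n, ∃ i, prefixCat (fun i => (mach T rk K).out (tr i)) n <+:
        regVal T w s i T.outReg := by
      intro n
      obtain ⟨i, hi⟩ := (hκ.eventually_ge_atTop n).exists
      refine ⟨i, ?_⟩
      rw [← h2 i]
      exact prefixCat_mono _ hi
    constructor
    · rintro ⟨g1, g2⟩
      refine ⟨fun i => ?_, fun m => ?_⟩
      · rw [← h2 i]; exact g1 (κ i)
      · obtain ⟨n, hn⟩ := g2 m
        obtain ⟨i, hi⟩ := h6 n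
        exact ⟨i, hn.trans hi.length_le⟩
    · rintro ⟨g1, g2⟩
      refine ⟨fun n => ?_, fun m => ?_⟩
      · obtain ⟨i, hi⟩ := h6 n
        exact (g1 i).mono hi
      · obtain ⟨i, hi⟩ := g2 m
        refine ⟨κ i, ?_⟩
        have := h2 i
        rw [← this] at hi
        exact hi

theorem mach_realizes [Fintype A] (hT : OnewayDet T.toOnewayAut) (hrk : Function.Injective rk)
    (hK : ∀ c t, T.color c t < K) (x : ℕ → B) :
    (mach T rk K).Realizes w x ↔ T.Realizes w x := by
  constructor
  · rintro ⟨cfg, tr, h1, h2, h3, h4⟩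
    have hs : OnewayRun T.toOnewayAut w (trun T w) :=
      ⟨by rw [trun], (run_of hT hrk h1).trun hT hrk⟩
    obtain ⟨_, g2, g3⟩ := run_main hT hrk hK h1 hs x
    exact ⟨_, hs, g2.1 h3, g3.1 h4⟩
  · rintro ⟨s, hs, h3, h4⟩
    obtain ⟨g, o, hr⟩ := exists_run (rk := rk) hT hrk hs.1 hs.2
    choose tr htr _ using fun k => step_from (K := K) hT hrk (hr.2 k)
    have h1 : IsRun (mach T rk K).toTwoWayAut w (fun k => (((g k).1, (g k).2.1), (g k).2.2)) tr := by
      refine ⟨?_, htr⟩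
      simp only [hr.1]
      rfl
    obtain ⟨g1, g2, g3⟩ := run_main hT hrk hK h1 hs x
    exact ⟨_, tr, h1, g1, g2.2 h3, g3.2 h4⟩

end Last


/-- Every copyless parity streaming string transducer `T` with `n` states
and `m` registers is equivalent to a reversible two-way parity transducer `S` with at most
`C·n²·m` states, for some absolute constant `C`. -/
theorem cpsst_to_rbt :
    ∃ C : ℕ, ∀ (A B : Type) [Fintype A] [Fintype B] (T : CPSST A B) (n m : ℕ),
      OnewayDet T.toOnewayAut →
      Fintype.card T.Q = n → Fintype.card T.R = m →
      ∃ S : TwoWayTrans A B,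
        Reversible S.toTwoWayAut ∧
        Fintype.card S.Q ≤ C * n ^ 2 * m ∧
        (∀ w x, S.Realizes w x ↔ T.Realizes w x) := by
  refine ⟨16, fun A B _ _ T n m hT hn hm => ?_⟩
  have hrk : Function.Injective (fun q : T.Q => ((Fintype.equivFin T.Q) q : ℕ)) := by
    intro a b hab
    exact (Fintype.equivFin T.Q).injective (Fin.ext hab)
  obtain ⟨K, hK⟩ : ∃ K, ∀ c t, T.color c t < K := by
    refine ⟨(∑ z : T.CIdx × (T.Q × A × T.Q), T.color z.1 z.2) + 1, fun c t => ?_⟩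
    exact Nat.lt_succ_of_le (Finset.single_le_sum
      (f := fun z : T.CIdx × (T.Q × A × T.Q) => T.color z.1 z.2)
      (fun _ _ => Nat.zero_le _) (Finset.mem_univ (c, t)))
  refine ⟨mach T _ K, mach_rev hT hrk, ?_, fun w x => mach_realizes hT hrk hK x⟩
  have : Fintype.card (mach T (fun q : T.Q => ((Fintype.equivFin T.Q) q : ℕ)) K).Q =
      Fintype.card (PP T.Q T.R × Bool) := by
    apply Fintype.card_congr
    exact Equiv.refl _
  rw [this]
  simp only [Fintype.card_prod, Fintype.card_bool, hn, hm]
  apply le_of_eq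
  ring

end Paper
end
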